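/- Let A be an n×n real skew-symmetric matrix. Then A is totally positive, i.e. A ∈ S_n^{>0}, if and only if M_{j,k}(A) > 0 for all integers 1 ≤ j ≤ k ≤ n−1. -/

import Mathlib

noncomputable section

open Matrix

/-- `N = n(n-1)/2`, the number of parameters. -/
def Npar (n : ℕ) : ℕ := n * (n - 1) / 2

/-- The decreasing run `a, a-1, …, b` (empty if `b > a`). -/
def decRun (a b : ℕ) : List ℕ := (List.range' b (a + 1 - b)).reverse

/-- The index sequence `(i_1, …, i_N)`: for `m = 1, …, ⌊n/2⌋` (here `m` is 0-based, so
`m+1` is the 1-based block index), concatenate `n`, the run `n-2, …, 2(m+1)-1`, and the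
run `n-1, …, 2(m+1)`. -/
def wordD (n : ℕ) : List ℕ :=
  ((List.range (n / 2)).map (fun m =>
    n :: (decRun (n - 2) (2 * m + 1) ++ decRun (n - 1) (2 * m + 2)))).flatten

/-- The matrix `x_i(t)` (index `i` is 1-based, matrix positions are 1-based in the paper,
0-based here). -/
def xMat (n : ℕ) (i : ℕ) (t : ℝ) : Matrix (Fin (2 * n)) (Fin (2 * n)) ℝ :=
  Matrix.of fun p q =>
    (if (p : ℕ) = (q : ℕ) then 1 else 0) +
    (if i < n then
        (if (p : ℕ) + 1 = i ∧ (q : ℕ) + 1 = i + 1 then t else 0)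
      + (if (p : ℕ) + 1 = n + i + 1 ∧ (q : ℕ) + 1 = n + i then -t else 0)
     else
        (if (p : ℕ) + 1 = n - 1 ∧ (q : ℕ) + 1 = 2 * n then t else 0)
      + (if (p : ℕ) + 1 = n ∧ (q : ℕ) + 1 = 2 * n - 1 then -t else 0))

/-- The product `x_{i_1}(t_1) ⋯ x_{i_N}(t_N)`; the parameter `t l` plays the role of
`t_{l+1}`. -/
def prodX (n : ℕ) (t : ℕ → ℝ) : Matrix (Fin (2 * n)) (Fin (2 * n)) ℝ :=
  ((List.range (Npar n)).map (fun l => xMat n ((wordD n).getD l 0) (t l))).prod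

/-- The first block `X₁(t)` of the first `n` rows of the product. -/
def X1 (n : ℕ) (t : ℕ → ℝ) : Matrix (Fin n) (Fin n) ℝ :=
  Matrix.of fun p q =>
    prodX n t ⟨(p : ℕ), by have := p.isLt; omega⟩ ⟨(q : ℕ), by have := q.isLt; omega⟩

/-- The second block `X₂(t)` of the first `n` rows of the product. -/
def X2 (n : ℕ) (t : ℕ → ℝ) : Matrix (Fin n) (Fin n) ℝ :=
  Matrix.of fun p q =>
    prodX n t ⟨(p : ℕ), by have := p.isLt; omega⟩ ⟨n + (q : ℕ), by have := q.isLt; omega⟩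

/-- The skew-symmetric matrix `A(t) = X₁(t)⁻¹ · X₂(t)`. -/
def Amat (n : ℕ) (t : ℕ → ℝ) : Matrix (Fin n) (Fin n) ℝ := (X1 n t)⁻¹ * X2 n t

/-- The set `S_n^{>0}` of totally positive skew-symmetric matrices. -/
def Spos (n : ℕ) : Set (Matrix (Fin n) (Fin n) ℝ) :=
  { A | ∃ t : ℕ → ℝ, (∀ i < Npar n, 0 < t i) ∧ A = Amat n t }

/-- The signed minor `M_{j,k}(A)`: `(-1)^{jk}` times the determinant of the submatrix of `A`
with (1-based) rows `{1,…,n-k-1} ∪ {n-k+j,…,n}` and columns `{1,…,n-j}`. -/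
def Mminor (n j k : ℕ) (A : Matrix (Fin n) (Fin n) ℝ) : ℝ :=
  (-1 : ℝ) ^ (j * k) *
    Matrix.det (Matrix.of fun (p q : Fin (n - j)) =>
      A (if (p : ℕ) < n - k - 1
          then ⟨(p : ℕ), by have := p.isLt; omega⟩
          else ⟨(p : ℕ) + j, by have := p.isLt; omega⟩)
        ⟨(q : ℕ), by have := q.isLt; omega⟩)

/-- The Pfaffian of an `m × m` matrix (intended for `m` even):
`Pf(B) = (1/(2^{m/2} (m/2)!)) Σ_σ sgn(σ) Π_i B_{σ(2i-1), σ(2i)}`. -/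
def Pfaff {m : ℕ} (B : Matrix (Fin m) (Fin m) ℝ) : ℝ :=
  (1 / ((2 : ℝ) ^ (m / 2) * (Nat.factorial (m / 2) : ℝ))) *
    ∑ σ : Equiv.Perm (Fin m), ((Equiv.Perm.sign σ : ℤ) : ℝ) *
      ∏ i : Fin (m / 2),
        B (σ ⟨2 * (i : ℕ), by have := i.isLt; omega⟩)
          (σ ⟨2 * (i : ℕ) + 1, by have := i.isLt; omega⟩)

/-- `Pf_I(A)`: the Pfaffian of the submatrix of `A` with rows and columns indexed by `I`
in increasing order. -/
def PfI {n : ℕ} (A : Matrix (Fin n) (Fin n) ℝ) (I : Finset (Fin n)) : ℝ :=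
  Pfaff (Matrix.of fun (p q : Fin I.card) =>
    A ((I.orderIsoOfFin rfl p : Fin n)) ((I.orderIsoOfFin rfl q : Fin n)))

/-- `sgn(I,[n]) = (-1)^{(Σ_{i∈I} i) - |I|(|I|+1)/2}` (the elements of `I` are 1-based, so a
0-based element `i` contributes `i+1`; the natural subtraction agrees with the integer one
since the sum of `|I|` distinct positive integers is at least `|I|(|I|+1)/2`). -/
def sgnSet {n : ℕ} (I : Finset (Fin n)) : ℝ :=
  (-1 : ℝ) ^ ((∑ i ∈ I, ((i : ℕ) + 1)) - I.card * (I.card + 1) / 2)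

/-- The block matrix `[Id_n | A]`. -/
def IdA {n : ℕ} (A : Matrix (Fin n) (Fin n) ℝ) : Matrix (Fin n) (Fin (2 * n)) ℝ :=
  Matrix.of fun p q =>
    if h : (q : ℕ) < n then (if (p : ℕ) = (q : ℕ) then 1 else 0)
    else A p ⟨(q : ℕ) - n, by have := q.isLt; omega⟩

/-- The full word `(j_1, …, j_{2N})`: `1, 2,1, 3,2,1, …, n-1,…,1` followed by `(i_1,…,i_N)`. -/
def wordFull (n : ℕ) : List ℕ :=
  (((List.range n).map (fun r => decRun r 1)).flatten) ++ wordD n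

/-- `z(ε) = x_{j_1}(ε) ⋯ x_{j_{2N}}(ε)`. -/
def zeps (n : ℕ) (ε : ℝ) : Matrix (Fin (2 * n)) (Fin (2 * n)) ℝ :=
  ((wordFull n).map (fun i => xMat n i ε)).prod

/-- `Z(ε) = z(ε)ᵀ · z(ε)`. -/
def Zeps (n : ℕ) (ε : ℝ) : Matrix (Fin (2 * n)) (Fin (2 * n)) ℝ :=
  (zeps n ε)ᵀ * zeps n ε

/-- First block `Y₁(ε)` of `[Id_n | A] · Z(ε)`. -/
def Y1 {n : ℕ} (A : Matrix (Fin n) (Fin n) ℝ) (ε : ℝ) : Matrix (Fin n) (Fin n) ℝ :=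
  Matrix.of fun p q => (IdA A * Zeps n ε) p ⟨(q : ℕ), by have := q.isLt; omega⟩

/-- Second block `Y₂(ε)` of `[Id_n | A] · Z(ε)`. -/
def Y2 {n : ℕ} (A : Matrix (Fin n) (Fin n) ℝ) (ε : ℝ) : Matrix (Fin n) (Fin n) ℝ :=
  Matrix.of fun p q => (IdA A * Zeps n ε) p ⟨n + (q : ℕ), by have := q.isLt; omega⟩

/-- The simple generators `s_i` of the Weyl group `W` of `SO(2n)`, as permutations of
`{1,…,2n}` (0-based here): for `1 ≤ i ≤ n-1`, `s_i = (i,i+1)(n+i,n+i+1)`; for `i = n`,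
`s_n = (n,2n-1)(n-1,2n)`. -/
def sGen (n : ℕ) (i : ℕ) : Equiv.Perm (Fin (2 * n)) :=
  if h : 1 ≤ i ∧ i ≤ n - 1 ∧ 2 ≤ n then
    Equiv.swap ⟨i - 1, by omega⟩ ⟨i, by omega⟩ *
      Equiv.swap ⟨n + i - 1, by omega⟩ ⟨n + i, by omega⟩
  else if h2 : i = n ∧ 2 ≤ n then
    Equiv.swap ⟨n - 1, by omega⟩ ⟨2 * n - 2, by omega⟩ *
      Equiv.swap ⟨n - 2, by omega⟩ ⟨2 * n - 1, by omega⟩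
  else 1

/-- Membership in the Weyl group `W`: `σ(n+i) ≡ n + σ(i) (mod 2n)` for all `1 ≤ i ≤ n`,
and the number of `i ∈ {1,…,n}` with `σ(i) > n` is even. (All positions are 0-based; a
0-based value `v` corresponds to the 1-based value `v+1`.) -/
def inW (n : ℕ) (σ : Equiv.Perm (Fin (2 * n))) : Prop :=
  (∀ i : Fin n,
    ((σ ⟨n + (i : ℕ), by have := i.isLt; omega⟩ : Fin (2 * n)) : ℕ)
      ≡ n + ((σ ⟨(i : ℕ), by have := i.isLt; omega⟩ : Fin (2 * n)) : ℕ) [MOD 2 * n]) ∧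
  Even (Finset.univ.filter (fun i : Fin n =>
    n ≤ ((σ ⟨(i : ℕ), by have := i.isLt; omega⟩ : Fin (2 * n)) : ℕ))).card

/-- `I_w = {i ∈ {1,…,n} : w(i) > n}`, as a finset of `Fin n` (0-based). -/
def Iset (n : ℕ) (σ : Equiv.Perm (Fin (2 * n))) : Finset (Fin n) :=
  Finset.univ.filter (fun i : Fin n =>
    n ≤ ((σ ⟨(i : ℕ), by have := i.isLt; omega⟩ : Fin (2 * n)) : ℕ))

/-- The parabolic subgroup `W_{[n-1]}` generated by `s_1, …, s_{n-1}`. -/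
def Wpar (n : ℕ) : Subgroup (Equiv.Perm (Fin (2 * n))) :=
  Subgroup.closure { σ | ∃ i, 1 ≤ i ∧ i ≤ n - 1 ∧ σ = sGen n i }

/-- The standard basis vector `e_i` of `ℝ^{2n}` (with `i : Fin n` 0-based, sitting in
position `i` of the first block). -/
def evec (n : ℕ) (i : Fin n) : Fin (2 * n) → ℝ :=
  Pi.single ⟨(i : ℕ), by have := i.isLt; omega⟩ 1

/-- The standard basis vector `f_j` of `ℝ^{2n}` (position `n + j`). -/
def fvec (n : ℕ) (j : Fin n) : Fin (2 * n) → ℝ :=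
  Pi.single ⟨n + (j : ℕ), by have := j.isLt; omega⟩ 1

/-- `f = ι(f_1)⋯ι(f_n)` in the Clifford algebra. -/
def fElt {n : ℕ} (Q : QuadraticForm ℝ (Fin (2 * n) → ℝ)) : CliffordAlgebra Q :=
  (List.ofFn (fun j : Fin n => CliffordAlgebra.ι Q (fvec n j))).prod

/-- `e_S = ι(e_{l_1})⋯ι(e_{l_s})` where `l_1 < ⋯ < l_s` enumerates `S`. -/
def eProd {n : ℕ} (Q : QuadraticForm ℝ (Fin (2 * n) → ℝ)) (S : Finset (Fin n)) :
    CliffordAlgebra Q :=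
  ((S.sort (· ≤ ·)).map (fun l => CliffordAlgebra.ι Q (evec n l))).prod

/-- `h = Π_{i=1}^n ι(e_i + Σ_j A_{ij} f_j)` (product in increasing order of `i`). -/
def hElt {n : ℕ} (Q : QuadraticForm ℝ (Fin (2 * n) → ℝ)) (A : Matrix (Fin n) (Fin n) ℝ) :
    CliffordAlgebra Q :=
  (List.ofFn (fun i : Fin n =>
    CliffordAlgebra.ι Q (evec n i + ∑ j : Fin n, A i j • fvec n j))).prod

/-- The sorted list of the (1-based) elements of `S ⊆ {1,…,n}`. -/
def valsOf {n : ℕ} (S : Finset (Fin n)) : List ℕ :=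
  (S.sort (· ≤ ·)).map (fun i => (i : ℕ) + 1)

/-- The word `w_1 w_2 ⋯ w_r` where
`w_m = s_n (s_{n-2}⋯s_{i_{2m-1}}) (s_{n-1}⋯s_{i_{2m}})` and `vals` lists `i_1 < i_2 < ⋯`
(1-based); `m` is 0-based here. -/
def uWord (n r : ℕ) (vals : List ℕ) : List ℕ :=
  ((List.range r).map (fun m =>
    n :: (decRun (n - 2) (vals.getD (2 * m) 0) ++ decRun (n - 1) (vals.getD (2 * m + 1) 0)))).flatten

/-- The permutation `u = w_1 w_2 ⋯ w_r`. -/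
def uPerm (n r : ℕ) (vals : List ℕ) : Equiv.Perm (Fin (2 * n)) :=
  ((uWord n r vals).map (sGen n)).prod

/-- `L = r + Σ_{m=1}^{r} ((n-1-i_{2m-1}) + (n-i_{2m}))`. -/
def Lval (n r : ℕ) (vals : List ℕ) : ℕ :=
  r + ∑ m ∈ Finset.range r, ((n - 1 - vals.getD (2 * m) 0) + (n - vals.getD (2 * m + 1) 0))

/-!
In the splitting `ℝ²ⁿ = ℝⁿ ⊕ ℝⁿ` the product of the `x_i(t)` is `[U, U A; 0, U⁻ᵀ]` with `U = X₁(t)`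
unitriangular and `A = A(t)`. Splitting off the first block of the word of size `n + 2` leaves the
word of size `n` acting on the last coordinates of each half, with matrix `A'`, say, and
`A - diag(0, 0, A')` is a skew-symmetric matrix of rank two. So `A'` is the Schur complement of the
top left `2 × 2` block of `A`.

If `U'` is the unitriangular part belonging to `A'`, then `U' A'` vanishes above its antidiagonal.
Writing `b`, `c` for the first two rows of `A` after the change of coordinates `U'`, every
`M_{j,k}(A)` is therefore a minor of `A'` times a `2 × 2` minor of `(b, c)`, with the exception of
one minor which is an entry of `b` up to sign. Hence, given that the minors of `A'` are positive,
those of `A` are positive iff `b` alternates in sign and the consecutive `2 × 2` minors of `(b, c)`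
(their Casoratian) are positive. The block parameters are ratios of these quantities, so this in
turn means that they are positive, and induction on `n` in steps of two gives both directions.
-/

section Unitriangular

variable {R ι κ : Type*} [CommRing R] [LinearOrder ι] [LinearOrder κ]

/-- Upper unitriangular matrices, the unipotent radical of the upper triangular ones. -/
structure IsUnitriangular (U : Matrix ι ι R) : Prop where
  isUpperTriangular : U.IsUpperTriangular
  diag (p : ι) : U p p = 1

namespace IsUnitriangular

theorem one : IsUnitriangular (1 : Matrix ι ι R) :=
  ⟨blockTriangular_one, one_apply_eq⟩

theorem submatrix {U : Matrix ι ι R} (hU : IsUnitriangular U) {f : κ → ι} (hf : StrictMono f) :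
    IsUnitriangular (U.submatrix f f) :=
  ⟨fun _ _ h => hU.isUpperTriangular (hf h), fun p => hU.diag (f p)⟩

theorem row_last {n : ℕ} {U : Matrix (Fin (n + 1)) (Fin (n + 1)) R} (hU : IsUnitriangular U) :
    U (Fin.last n) = Pi.single (Fin.last n) 1 := by
  funext q
  rw [Pi.single_apply]
  split_ifs with hq
  · rw [hq, hU.diag]
  · exact hU.isUpperTriangular (Fin.lt_last_iff_ne_last.2 hq)

variable [Fintype ι] {U V : Matrix ι ι R}

theorem mul (hU : IsUnitriangular U) (hV : IsUnitriangular V) :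
    IsUnitriangular (U * V) := by
  refine ⟨hU.isUpperTriangular.mul hV.isUpperTriangular, fun p => ?_⟩
  rw [mul_apply, Finset.sum_eq_single p, hU.diag, hV.diag, one_mul]
  · intro q _ hqp
    rcases hqp.lt_or_gt with hlt | hgt
    · rw [hU.isUpperTriangular hlt, zero_mul]
    · rw [hV.isUpperTriangular hgt, mul_zero]
  · simp

theorem det_eq_one (hU : IsUnitriangular U) : U.det = 1 := by
  simp [det_of_isUpperTriangular hU.isUpperTriangular, hU.diag]

theorem isUnit (hU : IsUnitriangular U) : IsUnit U :=
  (isUnit_iff_isUnit_det U).2 (hU.det_eq_one ▸ isUnit_one)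

theorem det_submatrix_mul [Fintype κ] (hU : IsUnitriangular U) (A : Matrix ι ι R)
    {f : κ → ι} (hf : StrictMono f) (g : κ → ι) (hUf : ∀ p, ∀ q ∉ Set.range f, U (f p) q = 0) :
    ((U * A).submatrix f g).det = (A.submatrix f g).det := by
  have hfactor : (U * A).submatrix f g = U.submatrix f f * A.submatrix f g := by
    ext p q
    simp only [submatrix_apply, mul_apply]
    exact (Fintype.sum_of_injective f hf.injective _ _
      (fun k hk => by rw [hUf p k hk, zero_mul]) fun _ => rfl).symm
  rw [hfactor, det_mul, (hU.submatrix hf).det_eq_one, one_mul]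

end IsUnitriangular

end Unitriangular

section Congruence

variable {R ι : Type*} [CommRing R]

theorem eq_of_mul_mul_transpose_eq [Fintype ι] [DecidableEq ι] {U X Y : Matrix ι ι R}
    (hU : IsUnit U) (h : U * X * Uᵀ = U * Y * Uᵀ) : X = Y :=
  hU.mul_left_cancel (((isUnit_transpose U).2 hU).mul_right_cancel h)

theorem exists_mul_sub_mul_transpose_eq [Fintype ι] [DecidableEq ι] {W : Matrix ι ι R}
    (hW : IsUnit W) (B C : Matrix ι ι R) : ∃ A, W * (A - B) * Wᵀ = C := by
  have hdet := (isUnit_iff_isUnit_det W).1 hW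
  refine ⟨W⁻¹ * C * (W⁻¹)ᵀ + B, ?_⟩
  rw [add_sub_cancel_right, Matrix.mul_assoc W⁻¹, mul_nonsing_inv_cancel_left _ _ hdet,
    Matrix.mul_assoc, ← transpose_mul, mul_nonsing_inv _ hdet, transpose_one, Matrix.mul_one]

theorem eq_zero_of_transpose_eq_neg [IsDomain R] [CharZero R] [Subsingleton ι] {A : Matrix ι ι R}
    (hA : Aᵀ = -A) : A = 0 := by
  ext p q
  obtain rfl := Subsingleton.elim p q
  exact self_eq_neg.1 (congr_fun₂ hA p p)

/-- The bivector `x ∧ y`, as the skew-symmetric matrix `x yᵀ - y xᵀ`. -/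
def wedge (x y : ι → R) : Matrix ι ι R := vecMulVec x y - vecMulVec y x

theorem wedge_apply (x y : ι → R) (p q : ι) : wedge x y p q = x p * y q - y p * x q := rfl

theorem transpose_wedge (x y : ι → R) : (wedge x y)ᵀ = -wedge x y := by
  simp [wedge, transpose_sub, transpose_vecMulVec]

theorem mul_wedge_mul_transpose [Fintype ι] (U : Matrix ι ι R) (x y : ι → R) :
    U * wedge x y * Uᵀ = wedge (U *ᵥ x) (U *ᵥ y) := by
  simp [wedge, Matrix.mul_sub, Matrix.sub_mul, mul_vecMulVec, vecMulVec_mul, vecMul_transpose]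

end Congruence

section PadTwo

variable {R : Type*} [CommRing R] {n : ℕ}

/-- Splits off the first two indices of `Fin (n + 2)`. -/
def finTwoSumEquiv (n : ℕ) : Fin 2 ⊕ Fin n ≃ Fin (n + 2) :=
  finSumFinEquiv.trans (finCongr (Nat.add_comm 2 n))

theorem finTwoSumEquiv_inl_lt_two (p : Fin 2) : (finTwoSumEquiv n (.inl p) : ℕ) < 2 := by
  simpa [finTwoSumEquiv] using p.is_le

theorem finTwoSumEquiv_inr (p : Fin n) : finTwoSumEquiv n (.inr p) = p.succ.succ := by
  ext
  simp only [finTwoSumEquiv, Equiv.trans_apply, finSumFinEquiv_apply_right, finCongr_apply,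
    Fin.val_cast, Fin.val_natAdd, Fin.val_succ]
  omega

/-- The block diagonal matrix `diag(c, c, M)`. Only `c = 1` (for unitriangular factors) and `c = 0`
(for skew-symmetric matrices) are of interest. -/
def padTwo (c : R) (M : Matrix (Fin n) (Fin n) R) : Matrix (Fin (n + 2)) (Fin (n + 2)) R :=
  reindex (finTwoSumEquiv n) (finTwoSumEquiv n) (fromBlocks (c • 1) 0 0 M)

theorem padTwo_mul (c d : R) (M N : Matrix (Fin n) (Fin n) R) :
    padTwo c M * padTwo d N = padTwo (c * d) (M * N) := by
  simp [padTwo, submatrix_mul_equiv, fromBlocks_multiply, smul_smul, mul_comm d c]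

theorem padTwo_add (c d : R) (M N : Matrix (Fin n) (Fin n) R) :
    padTwo c M + padTwo d N = padTwo (c + d) (M + N) := by
  simp only [padTwo, add_smul, reindex_apply]
  rw [← Pi.add_apply, ← Pi.add_apply, ← submatrix_add, fromBlocks_add, add_zero, add_zero]

theorem transpose_padTwo (c : R) (M : Matrix (Fin n) (Fin n) R) :
    (padTwo c M)ᵀ = padTwo c Mᵀ := by
  simp [padTwo, fromBlocks_transpose]

theorem padTwo_one : padTwo 1 (1 : Matrix (Fin n) (Fin n) R) = 1 := by
  simp [padTwo]

theorem padTwo_zero : padTwo 0 (0 : Matrix (Fin n) (Fin n) R) = 0 := by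
  simp [padTwo]

theorem smul_padTwo (t c : R) (M : Matrix (Fin n) (Fin n) R) :
    t • padTwo c M = padTwo (t * c) (t • M) := by
  simp only [padTwo, reindex_apply, ← smul_smul]
  rw [← Pi.smul_apply, ← Pi.smul_apply, ← submatrix_smul, fromBlocks_smul, smul_zero, smul_zero]

theorem padTwo_succ_succ (c : R) (M : Matrix (Fin n) (Fin n) R) (p q : Fin n) :
    padTwo c M p.succ.succ q.succ.succ = M p q := by
  simp [padTwo, ← finTwoSumEquiv_inr]

theorem padTwo_apply_of_lt_two (c : R) (M : Matrix (Fin n) (Fin n) R) {p q : Fin (n + 2)}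
    (h : (p : ℕ) < 2 ∨ (q : ℕ) < 2) : padTwo c M p q = if p = q then c else 0 := by
  obtain ⟨p | p, rfl⟩ := (finTwoSumEquiv n).surjective p <;>
    obtain ⟨q | q, rfl⟩ := (finTwoSumEquiv n).surjective q
  · simp [padTwo, one_apply]
  · simp [padTwo]
  · simp [padTwo]
  · simp [finTwoSumEquiv_inr] at h

theorem lt_two_or_eq_succ_succ (p q : Fin (n + 2)) :
    ((p : ℕ) < 2 ∨ (q : ℕ) < 2) ∨ ∃ p' q' : Fin n, p = p'.succ.succ ∧ q = q'.succ.succ := by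
  obtain ⟨p | p, rfl⟩ := (finTwoSumEquiv n).surjective p
  · exact .inl (.inl (finTwoSumEquiv_inl_lt_two p))
  obtain ⟨q | q, rfl⟩ := (finTwoSumEquiv n).surjective q
  · exact .inl (.inr (finTwoSumEquiv_inl_lt_two q))
  · exact .inr ⟨p, q, finTwoSumEquiv_inr p, finTwoSumEquiv_inr q⟩

theorem isUnitriangular_padTwo {U : Matrix (Fin n) (Fin n) R} (hU : IsUnitriangular U) :
    IsUnitriangular (padTwo 1 U) := by
  refine ⟨fun p q hqp => ?_, fun p => ?_⟩
  · obtain hpq | ⟨p, q, rfl, rfl⟩ := lt_two_or_eq_succ_succ p q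
    · rw [padTwo_apply_of_lt_two 1 U hpq]
      exact if_neg hqp.ne'
    · rw [padTwo_succ_succ]
      exact hU.isUpperTriangular (by simpa using hqp)
  · obtain hp | ⟨p, -, rfl, -⟩ := lt_two_or_eq_succ_succ p p
    · rw [padTwo_apply_of_lt_two 1 U hp, if_pos rfl]
    · rw [padTwo_succ_succ, hU.diag]

end PadTwo

section Bidiag

variable {R : Type*} [CommRing R] {n : ℕ}

/-- The skew-symmetric matrix `E_{n-1,n} - E_{n,n-1}` (1-based), the direction of the one-parameter
subgroup `x_n`; it is `0` when `n < 2`. -/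
def cornerSkew (R : Type*) [CommRing R] (n : ℕ) : Matrix (Fin n) (Fin n) R :=
  wedge (fun p => if (p : ℕ) + 2 = n then 1 else 0) fun p => if (p : ℕ) + 1 = n then 1 else 0

theorem padTwo_cornerSkew (hn : 2 ≤ n) : padTwo 0 (cornerSkew R n) = cornerSkew R (n + 2) := by
  ext p q
  obtain hpq | ⟨p, q, rfl, rfl⟩ := lt_two_or_eq_succ_succ p q
  · have hp : (p : ℕ) + 2 = n + 2 → (q : ℕ) + 1 ≠ n + 2 := by omega
    have hq : (p : ℕ) + 1 = n + 2 → (q : ℕ) + 2 ≠ n + 2 := by omega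
    rw [padTwo_apply_of_lt_two _ _ hpq, ite_self, cornerSkew, wedge_apply]
    grind
  · simp [padTwo_succ_succ, cornerSkew, wedge_apply]

/-- The bidiagonal unitriangular matrix of size `n` with superdiagonal `f 0, f 1, …, f (n - 2)`. -/
def bidiag (n : ℕ) (f : ℕ → R) : Matrix (Fin n) (Fin n) R :=
  of fun p q => if (p : ℕ) = q then 1 else if (p : ℕ) + 1 = q then f p else 0

theorem isUnitriangular_bidiag (f : ℕ → R) : IsUnitriangular (bidiag n f) := by
  refine ⟨fun p q hqp => ?_, fun p => if_pos rfl⟩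
  have hqp : (q : ℕ) < p := hqp
  simp [bidiag, show ¬(p : ℕ) = q by omega, show ¬(p : ℕ) + 1 = q by omega]

theorem bidiag_mulVec {f x : ℕ → R} (h : f n * x (n + 1) = 0) :
    (bidiag (n + 1) f *ᵥ fun p => x p) = fun p : Fin (n + 1) => x p + f p * x (p + 1) := by
  ext p
  let term (q : ℕ) : R := (if (p : ℕ) = q then 1 else if (p : ℕ) + 1 = q then f p else 0) * x q
  have hlast : term (n + 1) = 0 := by
    by_cases hp : (p : ℕ) = n
    · simpa [term, hp] using h
    · simp [term, hp, show (p : ℕ) ≠ n + 1 by omega]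
  have hterm (q : ℕ) :
      term q = (if (p : ℕ) = q then x q else 0) + if (p : ℕ) + 1 = q then f p * x q else 0 := by
    simp only [term]
    grind
  calc (bidiag (n + 1) f *ᵥ fun p => x p) p = ∑ q ∈ Finset.range (n + 1), term q :=
        Fin.sum_univ_eq_sum_range term (n + 1)
    _ = ∑ q ∈ Finset.range (n + 2), term q := by
        rw [Finset.sum_range_succ _ (n + 1), hlast, add_zero]
    _ = x p + f p * x (p + 1) := by
        simp only [hterm, Finset.sum_add_distrib, Finset.sum_ite_eq, Finset.mem_range]
        rw [if_pos (by omega), if_pos (by omega)]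

theorem bidiag_zero : bidiag n (0 : ℕ → R) = 1 := by
  ext p q
  simp [bidiag, one_apply, Fin.ext_iff]

theorem bidiag_mul_bidiag {f g : ℕ → R} (h : ∀ p, f p * g (p + 1) = 0) :
    bidiag n f * bidiag n g = bidiag n (f + g) := by
  rcases n with - | n
  · exact Subsingleton.elim _ _
  ext p q
  let column (i : ℕ) : R := if i = q then 1 else if i + 1 = q then g i else 0
  have hcolumn : column (n + 1) = 0 := by
    simp [column, show n + 1 ≠ q by omega, show n + 1 + 1 ≠ q by omega]
  have hentry : (bidiag (n + 1) f * bidiag (n + 1) g) p q = column p + f p * column (p + 1) :=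
    congr_fun (bidiag_mulVec (x := column) (by rw [hcolumn, mul_zero])) p
  rw [hentry]
  simp only [bidiag, column, of_apply, Pi.add_apply]
  grind

theorem bidiag_mul_apply_eq_zero (f : ℕ → R) {X : Matrix (Fin n) (Fin n) R} {k : ℕ}
    (hX : ∀ p q : Fin n, (p : ℕ) + q < k + 1 → X p q = 0) (p q : Fin n) (hpq : (p : ℕ) + q < k) :
    (bidiag n f * X) p q = 0 := by
  rw [mul_apply]
  refine Finset.sum_eq_zero fun i _ => ?_
  by_cases hi : (i : ℕ) ≤ p + 1
  · rw [hX i q (by omega), mul_zero]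
  · rw [bidiag, of_apply, if_neg (by omega), if_neg (by omega), zero_mul]

/-- The unitriangular part of one block `x_{n+2}(τ) · (x_n ⋯ x_1) · (x_{n+1} ⋯ x_2)` of the word of
size `n + 2`. -/
def blockMatrix (n : ℕ) (s r : ℕ → R) : Matrix (Fin (n + 2)) (Fin (n + 2)) R :=
  bidiag (n + 2) s * bidiag (n + 2) r

theorem isUnitriangular_blockMatrix (n : ℕ) (s r : ℕ → R) : IsUnitriangular (blockMatrix n s r) :=
  (isUnitriangular_bidiag s).mul (isUnitriangular_bidiag r)

theorem blockMatrix_mul_apply_eq_zero (s r : ℕ → R) {X : Matrix (Fin (n + 2)) (Fin (n + 2)) R}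
    {k : ℕ} (hX : ∀ p q : Fin (n + 2), (p : ℕ) + q < k + 2 → X p q = 0) (p q : Fin (n + 2))
    (hpq : (p : ℕ) + q < k) : (blockMatrix n s r * X) p q = 0 := by
  rw [blockMatrix, Matrix.mul_assoc]
  exact bidiag_mul_apply_eq_zero s (bidiag_mul_apply_eq_zero r hX) p q hpq

end Bidiag

section BlockRecurrence

/-- The discrete Wronskian of two sequences. -/
def casoratian {R : Type*} [CommRing R] (b c : ℕ → R) (i : ℕ) : R :=
  b i * c (i + 1) - c i * b (i + 1)

theorem exists_casoratian_eq {K : Type*} [Field K] {n : ℕ} {b : ℕ → K} (d : ℕ → K)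
    (hb : ∀ i ≤ n, b (i + 1) ≠ 0) :
    ∃ c : ℕ → K, c 0 = -b 1 ∧ c 1 = 0 ∧ ∀ i, 1 ≤ i → i ≤ n → casoratian b c i = d i := by
  -- The quotient `c / b` has increments `d i / (b i * b (i + 1))`.
  let c : ℕ → K
    | 0 => -b 1
    | i + 1 => b (i + 1) * ∑ j ∈ Finset.range i, d (j + 1) / (b (j + 1) * b (j + 2))
  refine ⟨c, rfl, by simp [c], fun i h1 hi => ?_⟩
  obtain ⟨i, rfl⟩ := Nat.exists_eq_add_of_le' h1
  have hbi := hb i (by omega)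
  have hbi' := hb (i + 1) hi
  simp only [casoratian, c, Finset.sum_range_succ]
  field_simp
  ring

variable {K : Type*} [Field K] [LinearOrder K]

/-- The sign conditions which positivity of the minors of a skew-symmetric matrix of size `n + 2`
imposes on its first two rows `b`, `c` (after a unitriangular change of the last `n` coordinates):
`b 1, b 2, …` alternate in sign and `b`, `c` have positive Casoratian. -/
structure AlternatingPair (n : ℕ) (b c : ℕ → K) : Prop where
  b_zero : b 0 = 0
  c_zero : c 0 = -b 1
  c_one : c 1 = 0
  b_alternating : ∀ i ≤ n, 0 < (-1) ^ i * b (i + 1)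
  casoratian_pos_of_one_le : ∀ i, 1 ≤ i → i ≤ n → 0 < casoratian b c i

/-- Positive parameters for one block `x_{n+2}(τ) · (x_n ⋯ x_1) · (x_{n+1} ⋯ x_2)` of the word of
size `n + 2`: `s i` is the parameter of `x_{i+1}` in the first run and `r i` that of `x_{i+1}` in
the second run, both extended by zero. -/
structure BlockParams (n : ℕ) (τ : K) (s r : ℕ → K) : Prop where
  τ_pos : 0 < τ
  s_pos : ∀ i < n, 0 < s i
  s_eq_zero : ∀ i, n ≤ i → s i = 0
  r_zero : r 0 = 0
  r_pos : ∀ i, 1 ≤ i → i ≤ n → 0 < r i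
  r_eq_zero : ∀ i, n < i → r i = 0

/-- The relations between the rows `b`, `c` of a matrix and the parameters of the block that
produces it, see `BlockRecurrence.blockMatrix_mul_wedge_mul_transpose`. -/
structure BlockRecurrence (n : ℕ) (τ : K) (s r b c : ℕ → K) : Prop where
  b_eq : ∀ i ≤ n, b i = -(r i * b (i + 1))
  casoratian_eq : ∀ i < n, casoratian b c i = s i * r (i + 1) * casoratian b c (i + 1)
  casoratian_last : casoratian b c n = τ * b 1

variable {n : ℕ} {τ : K} {s r b c : ℕ → K}

namespace AlternatingPair

theorem b_one_pos (h : AlternatingPair n b c) : 0 < b 1 := by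
  simpa using h.b_alternating 0 n.zero_le

theorem b_succ_ne_zero (h : AlternatingPair n b c) {i : ℕ} (hi : i ≤ n) : b (i + 1) ≠ 0 :=
  right_ne_zero_of_mul (h.b_alternating i hi).ne'

variable [IsStrictOrderedRing K]

theorem b_mul_b_succ_neg (h : AlternatingPair n b c) {i : ℕ} (hi : i < n) :
    b (i + 1) * b (i + 2) < 0 := by
  have hprod := mul_pos (h.b_alternating i hi.le) (h.b_alternating (i + 1) hi)
  have hsign : ((-1) ^ i * b (i + 1)) * ((-1) ^ (i + 1) * b (i + 1 + 1)) =
      -(b (i + 1) * b (i + 2)) * ((-1) ^ i * (-1) ^ i) := by ring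
  rw [hsign, ← mul_pow, neg_one_mul, neg_neg, one_pow, mul_one] at hprod
  exact neg_pos.1 hprod

theorem casoratian_pos (h : AlternatingPair n b c) {i : ℕ} (hi : i ≤ n) :
    0 < casoratian b c i := by
  rcases i with - | i
  · rw [casoratian, h.b_zero, h.c_zero, zero_mul, zero_sub, neg_mul, neg_neg]
    exact mul_pos h.b_one_pos h.b_one_pos
  · exact h.casoratian_pos_of_one_le _ (by omega) hi

theorem exists_blockParams (h : AlternatingPair n b c) :
    ∃ (τ : K) (s r : ℕ → K), BlockParams n τ s r ∧ BlockRecurrence n τ s r b c := by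
  let r (i : ℕ) : K := if i ≤ n then -(b i / b (i + 1)) else 0
  let s (i : ℕ) : K := if i < n then casoratian b c i / (r (i + 1) * casoratian b c (i + 1)) else 0
  have hr_pos (i : ℕ) (h1 : 1 ≤ i) (hi : i ≤ n) : 0 < r i := by
    obtain ⟨i, rfl⟩ := Nat.exists_eq_add_of_le' h1
    simp only [r, if_pos hi, neg_pos]
    have := h.b_mul_b_succ_neg hi
    rw [mul_neg_iff] at this
    exact div_neg_iff.2 this
  have hrD_pos {i : ℕ} (hi : i < n) : 0 < r (i + 1) * casoratian b c (i + 1) :=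
    mul_pos (hr_pos _ (by omega) hi) (h.casoratian_pos hi)
  refine ⟨casoratian b c n / b 1, s, r, ⟨div_pos (h.casoratian_pos le_rfl) h.b_one_pos,
    fun i hi => ?_, fun i hi => if_neg (by omega), ?_, hr_pos, fun i hi => if_neg (by omega)⟩,
    ⟨fun i hi => ?_, fun i hi => ?_, ?_⟩⟩
  · simp only [s, if_pos hi]
    exact div_pos (h.casoratian_pos hi.le) (hrD_pos hi)
  · simp [r, h.b_zero]
  · simp only [r, if_pos hi]
    have := h.b_succ_ne_zero hi
    field_simp
  · simp only [s, if_pos hi]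
    rw [mul_assoc, div_mul_cancel₀ _ (hrD_pos hi).ne']
  · rw [div_mul_cancel₀ _ h.b_one_pos.ne']

end AlternatingPair

theorem exists_alternatingPair_casoratian_eq {d : ℕ → K} (hb0 : b 0 = 0)
    (hb : ∀ i ≤ n, 0 < (-1) ^ i * b (i + 1)) (hd0 : d 0 = b 1 ^ 2) (hd : ∀ i ≤ n, 0 < d i) :
    ∃ c : ℕ → K, AlternatingPair n b c ∧ ∀ i ≤ n, casoratian b c i = d i := by
  obtain ⟨c, hc0, hc1, hc⟩ :=
    exists_casoratian_eq d fun i hi => right_ne_zero_of_mul (hb i hi).ne'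
  refine ⟨c, ⟨hb0, hc0, hc1, hb, fun i h1 hi => (hc i h1 hi).symm ▸ hd i hi⟩, fun i hi => ?_⟩
  rcases i with - | i
  · rw [casoratian, hb0, hc0, hd0]
    ring
  · exact hc _ (by omega) hi

theorem BlockParams.exists_alternatingPair [IsStrictOrderedRing K] (h : BlockParams n τ s r) :
    ∃ b c : ℕ → K, AlternatingPair n b c ∧ BlockRecurrence n τ s r b c := by
  let scale : K := τ * ∏ j ∈ Finset.range n, (s j * r (j + 1))
  let b : ℕ → K
    | 0 => 0
    | i + 1 => (-1) ^ i * (scale * ∏ j ∈ Finset.range i, (r (j + 1))⁻¹)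
  let d (i : ℕ) : K := scale ^ 2 * ∏ j ∈ Finset.range i, (s j * r (j + 1))⁻¹
  have hr {j : ℕ} (hj : j < n) : 0 < r (j + 1) := h.r_pos _ (by omega) hj
  have hsr {j : ℕ} (hj : j < n) : 0 < s j * r (j + 1) := mul_pos (h.s_pos j hj) (hr hj)
  have hprod : 0 < ∏ j ∈ Finset.range n, (s j * r (j + 1)) :=
    Finset.prod_pos fun j hj => hsr (Finset.mem_range.1 hj)
  have hscale : 0 < scale := mul_pos h.τ_pos hprod
  have hb_pos (i : ℕ) (hi : i ≤ n) : 0 < (-1) ^ i * b (i + 1) := by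
    simp only [b, ← mul_assoc, ← mul_pow, neg_one_mul, neg_neg, one_pow, one_mul]
    refine mul_pos hscale (Finset.prod_pos fun j hj => inv_pos.2 (hr ?_))
    exact (Finset.mem_range.1 hj).trans_le hi
  have hd_pos (i : ℕ) (hi : i ≤ n) : 0 < d i := by
    refine mul_pos (pow_pos hscale 2) (Finset.prod_pos fun j hj => inv_pos.2 (hsr ?_))
    exact (Finset.mem_range.1 hj).trans_le hi
  obtain ⟨c, hbc, hD⟩ :=
    exists_alternatingPair_casoratian_eq rfl hb_pos (by simp [d, b]) hd_pos
  refine ⟨b, c, hbc, ⟨fun i hi => ?_, fun i hi => ?_, ?_⟩⟩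
  · rcases i with - | i
    · simp [h.r_zero, b]
    · simp only [b, Finset.prod_range_succ]
      have := (hr hi).ne'
      field_simp
      ring
  · rw [hD i hi.le, hD (i + 1) hi]
    simp only [d, Finset.prod_range_succ]
    rw [mul_left_comm, mul_left_comm (s i * r (i + 1)), mul_inv_cancel₀ (hsr hi).ne', mul_one]
  · rw [hD n le_rfl]
    simp only [d, b, scale, Finset.prod_inv_distrib, Finset.prod_range_zero]
    field_simp

namespace BlockRecurrence

theorem blockMatrix_mulVec_b (h : BlockRecurrence n τ s r b c) (hpar : BlockParams n τ s r) :
    (blockMatrix n s r *ᵥ fun p => b p) =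
      fun p : Fin (n + 2) => if (p : ℕ) = n + 1 then b (n + 1) else 0 := by
  let y (p : ℕ) : K := if p = n + 1 then b (n + 1) else 0
  have hr : (bidiag (n + 2) r *ᵥ fun p => b p) = fun p : Fin (n + 2) => y p := by
    rw [bidiag_mulVec (by rw [hpar.r_eq_zero _ (by omega), zero_mul])]
    ext p
    by_cases hp : (p : ℕ) = n + 1
    · simp [y, hp, hpar.r_eq_zero]
    · simp [y, hp, h.b_eq p (by omega)]
  rw [blockMatrix, ← mulVec_mulVec, hr,
    bidiag_mulVec (by rw [hpar.s_eq_zero _ (by omega), zero_mul])]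
  ext p
  by_cases hp : (p : ℕ) = n
  · simp [y, hp, hpar.s_eq_zero]
  · simp [y, hp]

theorem blockMatrix_mulVec_c (h : BlockRecurrence n τ s r b c) (hpar : BlockParams n τ s r)
    (hbc : AlternatingPair n b c) :
    (blockMatrix n s r *ᵥ fun p => c p) = fun p : Fin (n + 2) =>
      if (p : ℕ) = n then -(casoratian b c n / b (n + 1))
      else if (p : ℕ) = n + 1 then c (n + 1) else 0 := by
  let z (p : ℕ) : K := c p + r p * c (p + 1)
  have hz {i : ℕ} (hi : i ≤ n) : z i = -(casoratian b c i / b (i + 1)) := by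
    have := hbc.b_succ_ne_zero hi
    simp only [casoratian, z]
    rw [h.b_eq i hi]
    field_simp
    ring
  have hz_rec {i : ℕ} (hi : i < n) : z i + s i * z (i + 1) = 0 := by
    have := hbc.b_succ_ne_zero (Nat.succ_le_of_lt hi)
    have hr := (hpar.r_pos (i + 1) (by omega) hi).ne'
    rw [hz hi.le, hz hi, h.casoratian_eq i hi, h.b_eq (i + 1) hi]
    field_simp
    ring
  rw [blockMatrix, ← mulVec_mulVec,
    bidiag_mulVec (by rw [hpar.r_eq_zero _ (by omega), zero_mul])]
  change (bidiag (n + 2) s *ᵥ fun p => z p) = _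
  rw [bidiag_mulVec (by rw [hpar.s_eq_zero _ (by omega), zero_mul])]
  ext p
  rcases lt_trichotomy (p : ℕ) n with hp | hp | hp
  · simp [hz_rec hp, hp.ne, show (p : ℕ) ≠ n + 1 by omega]
  · simp [hp, hpar.s_eq_zero, hz]
  · simp [z, show (p : ℕ) = n + 1 by omega, hpar.s_eq_zero, hpar.r_eq_zero]

theorem blockMatrix_mul_wedge_mul_transpose (h : BlockRecurrence n τ s r b c)
    (hpar : BlockParams n τ s r) (hbc : AlternatingPair n b c) :
    blockMatrix n s r * wedge (fun p : Fin (n + 2) => b p) (fun p => c p) *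
        (blockMatrix n s r)ᵀ =
      (τ * b 1) • cornerSkew K (n + 2) := by
  rw [mul_wedge_mul_transpose, h.blockMatrix_mulVec_b hpar, h.blockMatrix_mulVec_c hpar hbc,
    ← h.casoratian_last]
  have := hbc.b_succ_ne_zero le_rfl
  ext p q
  simp only [wedge_apply, cornerSkew, Matrix.smul_apply, smul_eq_mul, Nat.reduceEqDiff]
  grind

end BlockRecurrence

end BlockRecurrence

section SchurComplement

variable {K : Type*} [Field K] {n : ℕ} {A : Matrix (Fin (n + 2)) (Fin (n + 2)) K}
  {A' U : Matrix (Fin n) (Fin n) K} {b c : ℕ → K}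

theorem padTwo_one_row (V : Matrix (Fin n) (Fin n) K) {p : Fin (n + 2)} (hp : (p : ℕ) < 2) :
    padTwo 1 V p = Pi.single p 1 := by
  ext q
  rw [padTwo_apply_of_lt_two _ _ (.inl hp), Pi.single_apply]
  simp only [eq_comm]

theorem padTwo_one_mul_row (V : Matrix (Fin n) (Fin n) K)
    (X : Matrix (Fin (n + 2)) (Fin (n + 2)) K) {p : Fin (n + 2)} (hp : (p : ℕ) < 2) :
    (padTwo 1 V * X) p = X p := by
  rw [mul_apply_eq_vecMul, padTwo_one_row V hp, single_one_vecMul]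
  rfl

theorem padTwo_one_mulVec_apply (V : Matrix (Fin n) (Fin n) K) (x : Fin (n + 2) → K)
    {p : Fin (n + 2)} (hp : (p : ℕ) < 2) : (padTwo 1 V *ᵥ x) p = x p := by
  rw [mulVec, padTwo_one_row V hp, single_one_dotProduct]

/-- `A'` is the Schur complement of the top left block `[0, a; -a, 0]`, `a ≠ 0`, of `A`. -/
structure IsSchurComplement (A : Matrix (Fin (n + 2)) (Fin (n + 2)) K)
    (A' : Matrix (Fin n) (Fin n) K) : Prop where
  apply_zero_zero : A 0 0 = 0
  apply_one_one : A 1 1 = 0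
  apply_one_zero : A 1 0 = -A 0 1
  apply_zero_one_ne_zero : A 0 1 ≠ 0
  wedge_eq : A 0 1 • (A - padTwo 0 A') = wedge (A 0) (A 1)

/-- `b` and `c` list the entries of the first two rows of `A`, after the unitriangular change `U`
of the last `n` coordinates. -/
structure LeadingRows (U : Matrix (Fin n) (Fin n) K) (A : Matrix (Fin (n + 2)) (Fin (n + 2)) K)
    (b c : ℕ → K) : Prop where
  row_zero : padTwo 1 U *ᵥ A 0 = fun p : Fin (n + 2) => b p
  row_one : padTwo 1 U *ᵥ A 1 = fun p : Fin (n + 2) => c p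

theorem LeadingRows.apply_zero (h : LeadingRows U A b c) {q : Fin (n + 2)} (hq : (q : ℕ) < 2) :
    A 0 q = b q := by
  rw [← padTwo_one_mulVec_apply U (A 0) hq, h.row_zero]

theorem LeadingRows.apply_one (h : LeadingRows U A b c) {q : Fin (n + 2)} (hq : (q : ℕ) < 2) :
    A 1 q = c q := by
  rw [← padTwo_one_mulVec_apply U (A 1) hq, h.row_one]

theorem LeadingRows.apply_zero_one (h : LeadingRows U A b c) : A 0 1 = b 1 := by
  simpa using h.apply_zero (q := 1) (by simp)

theorem exists_leadingRows (U : Matrix (Fin n) (Fin n) K)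
    (A : Matrix (Fin (n + 2)) (Fin (n + 2)) K) : ∃ b c : ℕ → K, LeadingRows U A b c :=
  ⟨fun i => (padTwo 1 U *ᵥ A 0) (Fin.ofNat (n + 2) i),
    fun i => (padTwo 1 U *ᵥ A 1) (Fin.ofNat (n + 2) i), by simp, by simp⟩

theorem IsSchurComplement.transpose_eq_neg (h : IsSchurComplement A A') (hA' : A'ᵀ = -A') :
    Aᵀ = -A := by
  have hA : A = (A 0 1)⁻¹ • wedge (A 0) (A 1) + padTwo 0 A' := by
    rw [← h.wedge_eq, inv_smul_smul₀ h.apply_zero_one_ne_zero, sub_add_cancel]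
  have hpad : padTwo 0 (-A') = -padTwo 0 A' := by
    simpa using (smul_padTwo (-1) 0 A').symm
  rw [hA, transpose_add, transpose_smul, transpose_wedge, transpose_padTwo, hA', hpad, smul_neg,
    neg_add]

theorem IsSchurComplement.mul_sub_mul_transpose (h : IsSchurComplement A A')
    (hrows : LeadingRows U A b c) :
    b 1 • (padTwo 1 U * (A - padTwo 0 A') * (padTwo 1 U)ᵀ) =
      wedge (fun p : Fin (n + 2) => b p) (fun p => c p) := by
  rw [← hrows.row_zero, ← hrows.row_one, ← mul_wedge_mul_transpose, ← h.wedge_eq,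
    ← hrows.apply_zero_one, Matrix.mul_smul, Matrix.smul_mul]

/-- The explicit Schur complement. -/
def schurComplement (A : Matrix (Fin (n + 2)) (Fin (n + 2)) K) : Matrix (Fin n) (Fin n) K :=
  of fun p q => A p.succ.succ q.succ.succ -
    (A 0 p.succ.succ * A 1 q.succ.succ - A 1 p.succ.succ * A 0 q.succ.succ) / A 0 1

theorem transpose_schurComplement (hA : Aᵀ = -A) :
    (schurComplement A)ᵀ = -schurComplement A := by
  ext p q
  have := congr_fun₂ hA p.succ.succ q.succ.succ
  simp only [transpose_apply, Matrix.neg_apply] at this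
  simp only [schurComplement, transpose_apply, Matrix.neg_apply, of_apply, this]
  ring

theorem isSchurComplement_schurComplement [CharZero K] (hA : Aᵀ = -A) (h01 : A 0 1 ≠ 0) :
    IsSchurComplement A (schurComplement A) := by
  have hskew (p q : Fin (n + 2)) : A q p = -A p q := congr_fun₂ hA p q
  have hdiag (p : Fin (n + 2)) : A p p = 0 := self_eq_neg.1 (hskew p p)
  refine ⟨hdiag 0, hdiag 1, hskew 0 1, h01, ?_⟩
  have htop (p q : Fin (n + 2)) (hp : (p : ℕ) < 2) : A 0 1 * A p q = wedge (A 0) (A 1) p q := by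
    obtain rfl | rfl : p = 0 ∨ p = 1 := by
      simp only [Fin.ext_iff, Fin.val_zero, Fin.val_one]
      omega
    · rw [wedge_apply, hdiag, hskew 0 1]
      ring
    · rw [wedge_apply, hdiag]
      ring
  ext p q
  rw [Matrix.smul_apply, Matrix.sub_apply, smul_eq_mul]
  obtain hpq | ⟨p, q, rfl, rfl⟩ := lt_two_or_eq_succ_succ p q
  · rw [padTwo_apply_of_lt_two _ _ hpq, ite_self, sub_zero]
    rcases hpq with hp | hq
    · exact htop p q hp
    · rw [hskew q p, mul_neg, htop q p hq, wedge_apply, wedge_apply]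
      ring
  · rw [padTwo_succ_succ, schurComplement, of_apply, sub_sub_cancel, mul_div_cancel₀ _ h01,
      wedge_apply]

theorem isSchurComplement_and_leadingRows_of_wedge_eq (hU : IsUnitriangular U)
    (hb0 : b 0 = 0) (hb1 : b 1 ≠ 0) (hc0 : c 0 = -b 1) (hc1 : c 1 = 0)
    (h : b 1 • (padTwo 1 U * (A - padTwo 0 A') * (padTwo 1 U)ᵀ) =
      wedge (fun p : Fin (n + 2) => b p) (fun p => c p)) :
    IsSchurComplement A A' ∧ LeadingRows U A b c := by
  have hrow {p : Fin (n + 2)} (hp : (p : ℕ) < 2) :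
      (padTwo 1 U * (A - padTwo 0 A') * (padTwo 1 U)ᵀ) p = padTwo 1 U *ᵥ A p := by
    have hA : (A - padTwo 0 A') p = A p := by
      ext q
      rw [Matrix.sub_apply, padTwo_apply_of_lt_two _ _ (.inl hp), ite_self, sub_zero]
    rw [Matrix.mul_assoc, padTwo_one_mul_row _ _ hp, mul_apply_eq_vecMul, vecMul_transpose, hA]
  have hrows : LeadingRows U A b c := by
    constructor <;> ext q <;> apply mul_left_cancel₀ hb1 <;> rw [← hrow (by simp)]
    · simpa [wedge_apply, hb0, hc0] using congr_fun₂ h 0 q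
    · simpa [wedge_apply, hc1] using congr_fun₂ h 1 q
  have h00 : A 0 0 = 0 := by simpa [hb0] using hrows.apply_zero (q := 0) (by simp)
  have h11 : A 1 1 = 0 := by simpa [hc1] using hrows.apply_one (q := 1) (by simp)
  have h10 : A 1 0 = -b 1 := by simpa [hc0] using hrows.apply_one (q := 0) (by simp)
  have h01 := hrows.apply_zero_one
  refine ⟨⟨h00, h11, h01 ▸ h10, h01 ▸ hb1, ?_⟩, hrows⟩
  refine eq_of_mul_mul_transpose_eq (isUnitriangular_padTwo hU).isUnit ?_
  rw [Matrix.mul_smul, Matrix.smul_mul, h01, h, mul_wedge_mul_transpose, hrows.row_zero,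
    hrows.row_one]

end SchurComplement

section Minors

variable {K : Type*} [Field K] {m n j a : ℕ}

theorem det_submatrix_padTwo_add (X : Matrix (Fin n) (Fin n) K) (x y α β : Fin (n + 2) → K)
    {f g : Fin (m + 2) → Fin (n + 2)} {f' g' : Fin m → Fin n}
    (hf : ∀ p, f p.succ.succ = (f' p).succ.succ) (hg : ∀ q, g q.succ.succ = (g' q).succ.succ)
    (hX : ∀ p q : Fin (m + 2), (p : ℕ) < 2 → padTwo 0 X (f p) (g q) = 0)
    (hg2 : ∀ q : Fin (m + 2), (q : ℕ) < 2 → (g q : ℕ) < 2) :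
    ((padTwo 0 X + vecMulVec x α + vecMulVec y β).submatrix f g).det =
      (x (f 0) * y (f 1) - y (f 0) * x (f 1)) * (α (g 0) * β (g 1) - α (g 1) * β (g 0)) *
        (X.submatrix f' g').det := by
  let e := finTwoSumEquiv m
  let left : Matrix (Fin 2 ⊕ Fin m) (Fin 2 ⊕ Fin m) K :=
    fromBlocks (of fun i k => ![x, y] k (f (e (.inl i)))) 0
      (of fun p k => ![x, y] k (f (e (.inr p)))) (X.submatrix f' g')
  let right : Matrix (Fin 2 ⊕ Fin m) (Fin 2 ⊕ Fin m) K :=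
    fromBlocks (of fun k i => ![α, β] k (g (e (.inl i))))
      (of fun k q => ![α, β] k (g (e (.inr q)))) 0 1
  have hfactor : (padTwo 0 X + vecMulVec x α + vecMulVec y β).submatrix (f ∘ e) (g ∘ e) =
      left * right := by
    rw [fromBlocks_multiply]
    ext p q
    rcases p with p | p <;> rcases q with q | q
    · simp [mul_apply, hX _ _ (finTwoSumEquiv_inl_lt_two p), vecMulVec_apply, e]
    · simp [mul_apply, hX _ _ (finTwoSumEquiv_inl_lt_two p), vecMulVec_apply, e]
    · simp [mul_apply, vecMulVec_apply, e,
        padTwo_apply_of_lt_two _ _ (.inr (hg2 _ (finTwoSumEquiv_inl_lt_two q)))]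
    · simp [mul_apply, vecMulVec_apply, e, finTwoSumEquiv_inr, hf, hg, padTwo_succ_succ,
        add_assoc, add_comm]
  have he0 : e (.inl 0) = 0 := rfl
  have he1 : e (.inl 1) = 1 := by ext; simp [e, finTwoSumEquiv]
  rw [← det_submatrix_equiv_self e, submatrix_submatrix, hfactor, det_mul, det_fromBlocks_zero₁₂,
    det_fromBlocks_zero₂₁, det_one, det_fin_two, det_fin_two]
  simp only [of_apply, he0, he1, cons_val_zero, cons_val_one]
  ring

/-- Selects `{1, …, a} ∪ {a + j + 1, …, n}` (1-based), where `m + j = n`: there is a gap of length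
`j` after the first `a` indices. -/
def gapRows (a : ℕ) (h : m + j = n) (p : Fin m) : Fin n :=
  ⟨if (p : ℕ) < a then p else p + j, by split_ifs <;> omega⟩

theorem strictMono_gapRows (a : ℕ) (h : m + j = n) : StrictMono (gapRows a h) := by
  intro p q hpq
  have : (p : ℕ) < q := hpq
  simp only [gapRows, Fin.mk_lt_mk]
  split_ifs <;> omega

theorem mem_range_gapRows (h : m + j = n) {q : Fin n} (hq : a + j ≤ q) :
    q ∈ Set.range (gapRows a h) := by
  refine ⟨⟨q - j, by omega⟩, ?_⟩
  ext
  simp only [gapRows]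
  split_ifs <;> omega

theorem gapRows_succ_succ (h₂ : m + 2 + j = n + 2) (h : m + j = n) (p : Fin m) :
    gapRows a h₂ p.succ.succ = (gapRows (a - 2) h p).succ.succ := by
  ext
  simp only [gapRows, Fin.val_succ]
  split_ifs <;> omega

/-- The minor of `A` on the first `m` columns and the rows selected by `gapRows`. -/
def gapMinor (a : ℕ) (h : m + j = n) (A : Matrix (Fin n) (Fin n) K) : K :=
  (A.submatrix (gapRows a h) (Fin.castLE (Nat.le.intro h))).det

theorem Mminor_eq {k : ℕ} (h : m + j = n) (A : Matrix (Fin n) (Fin n) ℝ) :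
    Mminor n j k A = (-1) ^ (j * k) * gapMinor (n - k - 1) h A := by
  obtain rfl : m = n - j := by omega
  rw [Mminor, gapMinor]
  congr 2
  ext p q
  simp only [of_apply, submatrix_apply, gapRows]
  congr 1
  split_ifs <;> rfl

theorem IsUnitriangular.gapMinor_mul {U : Matrix (Fin n) (Fin n) K} (hU : IsUnitriangular U)
    (hUa : ∀ p q : Fin n, (p : ℕ) < a → p < q → U p q = 0) (h : m + j = n)
    (A : Matrix (Fin n) (Fin n) K) : gapMinor a h (U * A) = gapMinor a h A := by
  refine hU.det_submatrix_mul A (strictMono_gapRows a h) _ fun p q hq => ?_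
  obtain hlt | rfl | hgt := lt_trichotomy q (gapRows a h p)
  · exact hU.isUpperTriangular hlt
  · exact absurd (Set.mem_range_self p) hq
  · refine hUa _ _ ?_ hgt
    by_contra! hrow
    have hval : gapRows a h p < (q : ℕ) := hgt
    refine hq (mem_range_gapRows h ?_)
    simp only [gapRows] at hrow hval
    split_ifs at hrow hval <;> omega

/-- `X` vanishes strictly above the antidiagonal. -/
def VanishesAboveAntidiag (X : Matrix (Fin n) (Fin n) K) : Prop :=
  ∀ p q : Fin n, (p : ℕ) + q + 1 < n → X p q = 0

theorem VanishesAboveAntidiag.padTwo_apply {X : Matrix (Fin n) (Fin n) K}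
    (hX : VanishesAboveAntidiag X) {p q : Fin (n + 2)} (hpq : (p : ℕ) + q < n + 3) :
    padTwo 0 X p q = 0 := by
  obtain h2 | ⟨p, q, rfl, rfl⟩ := lt_two_or_eq_succ_succ p q
  · rw [padTwo_apply_of_lt_two _ _ h2, ite_self]
  · rw [padTwo_succ_succ]
    simp only [Fin.val_succ] at hpq
    exact hX p q (by omega)

variable {A : Matrix (Fin (n + 2)) (Fin (n + 2)) K} {A' U : Matrix (Fin n) (Fin n) K} {b c : ℕ → K}

theorem IsSchurComplement.padTwo_one_mul (h : IsSchurComplement A A')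
    (V : Matrix (Fin n) (Fin n) K) :
    padTwo 1 V * A = padTwo 0 (V * A') + vecMulVec (padTwo 1 V *ᵥ A 0) ((A 0 1)⁻¹ • A 1) +
      vecMulVec (padTwo 1 V *ᵥ A 1) (-(A 0 1)⁻¹ • A 0) := by
  have hA : A = padTwo 0 A' + (A 0 1)⁻¹ • wedge (A 0) (A 1) := by
    rw [← h.wedge_eq, inv_smul_smul₀ h.apply_zero_one_ne_zero, add_sub_cancel]
  conv_lhs => rw [hA]
  rw [Matrix.mul_add, padTwo_mul, one_mul, Matrix.mul_smul, wedge, Matrix.mul_sub,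
    mul_vecMulVec, mul_vecMulVec, vecMulVec_smul, vecMulVec_smul, smul_sub, neg_smul, add_assoc,
    sub_eq_add_neg]

theorem IsSchurComplement.gapMinor_padTwo_one_mul (h : IsSchurComplement A A')
    (V : Matrix (Fin n) (Fin n) K) (h₂ : m + 2 + j = n + 2) (hmj : m + j = n)
    (hV : ∀ p q : Fin (m + 2), (p : ℕ) < 2 →
      padTwo 0 (V * A') (gapRows a h₂ p) (q.castLE (Nat.le.intro h₂)) = 0) :
    gapMinor a h₂ (padTwo 1 V * A) =
      wedge (padTwo 1 V *ᵥ A 0) (padTwo 1 V *ᵥ A 1) (gapRows a h₂ 0) (gapRows a h₂ 1) *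
        gapMinor (a - 2) hmj (V * A') := by
  have hcols : (((A 0 1)⁻¹ • A 1) 0 * (-(A 0 1)⁻¹ • A 0) 1 -
      ((A 0 1)⁻¹ • A 1) 1 * (-(A 0 1)⁻¹ • A 0) 0) = 1 := by
    have := h.apply_zero_one_ne_zero
    simp only [Pi.smul_apply, smul_eq_mul, h.apply_one_zero, h.apply_one_one]
    field_simp
    ring
  rw [gapMinor, h.padTwo_one_mul, det_submatrix_padTwo_add _ _ _ _ _ (gapRows_succ_succ h₂ hmj)
    (g' := Fin.castLE (Nat.le.intro hmj)) (fun q => rfl) hV (fun q hq => hq), wedge_apply]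
  change _ * (((A 0 1)⁻¹ • A 1) 0 * (-(A 0 1)⁻¹ • A 0) 1 -
      ((A 0 1)⁻¹ • A 1) 1 * (-(A 0 1)⁻¹ • A 0) 0) * _ = _
  rw [hcols, mul_one, gapMinor]

theorem IsSchurComplement.gapMinor_of_two_le (h : IsSchurComplement A A') (ha : 2 ≤ a)
    (h₂ : m + 2 + j = n + 2) (hmj : m + j = n) :
    gapMinor a h₂ A = A 0 1 ^ 2 * gapMinor (a - 2) hmj A' := by
  have hrow (p : Fin (m + 2)) (hp : (p : ℕ) < 2) : (gapRows a h₂ p : ℕ) = p :=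
    if_pos (hp.trans_le ha)
  have h0 : gapRows a h₂ 0 = 0 := Fin.ext (hrow 0 (by simp))
  have h1 : gapRows a h₂ 1 = 1 := Fin.ext (hrow 1 (by simp))
  have := h.gapMinor_padTwo_one_mul 1 (a := a) h₂ hmj fun p q hp => by
    rw [padTwo_apply_of_lt_two _ _ (.inl ((hrow p hp).trans_lt hp)), ite_self]
  rw [padTwo_one, one_mul, one_mul, one_mulVec, one_mulVec, wedge_apply, h0, h1,
    h.apply_zero_zero, h.apply_one_zero] at this
  rw [this]
  ring

theorem IsSchurComplement.gapMinor_of_le_one (h : IsSchurComplement A A')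
    (hrows : LeadingRows U A b c) (hU : IsUnitriangular U) (hUA' : VanishesAboveAntidiag (U * A'))
    (ha : a ≤ 1) (h₂ : m + 2 + j = n + 2) (hmj : m + j = n) :
    gapMinor a h₂ A =
      wedge (fun p : Fin (n + 2) => b p) (fun p => c p) (gapRows a h₂ 0) (gapRows a h₂ 1) *
        gapMinor 0 hmj A' := by
  have hpad (p q : Fin (n + 2)) (hp : (p : ℕ) < a) (hpq : p < q) : padTwo 1 U p q = 0 := by
    rw [padTwo_apply_of_lt_two _ _ (.inl (by omega)), if_neg hpq.ne]
  have hvanish (p q : Fin (m + 2)) (hp : (p : ℕ) < 2) :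
      padTwo 0 (U * A') (gapRows a h₂ p) (q.castLE (Nat.le.intro h₂)) = 0 := by
    refine hUA'.padTwo_apply ?_
    simp only [gapRows, Fin.val_castLE]
    split_ifs <;> omega
  rw [← (isUnitriangular_padTwo hU).gapMinor_mul hpad h₂,
    h.gapMinor_padTwo_one_mul U h₂ hmj hvanish, hrows.row_zero, hrows.row_one,
    Nat.sub_eq_zero_of_le (ha.trans one_le_two), hU.gapMinor_mul (by omega) hmj]

theorem IsSchurComplement.vanishesAboveAntidiag_mul [LinearOrder K] {τ : K} {s r : ℕ → K}
    (h : IsSchurComplement A A') (hrows : LeadingRows U A b c)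
    (hUA' : VanishesAboveAntidiag (U * A')) (hrec : BlockRecurrence n τ s r b c)
    (hpar : BlockParams n τ s r) (hbc : AlternatingPair n b c) :
    VanishesAboveAntidiag (blockMatrix n s r * padTwo 1 U * A) := by
  intro p q hpq
  have hpad : (blockMatrix n s r * padTwo 0 (U * A')) p q = 0 :=
    blockMatrix_mul_apply_eq_zero s r (fun p q hpq => hUA'.padTwo_apply hpq) p q (by omega)
  have hcorner : (blockMatrix n s r *ᵥ fun p => c p) p * (-(A 0 1)⁻¹ • A 0) q = 0 := by
    rw [hrec.blockMatrix_mulVec_c hpar hbc]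
    by_cases hp : (p : ℕ) = n
    · obtain rfl : q = 0 := Fin.ext (show (q : ℕ) = 0 by omega)
      rw [Pi.smul_apply, h.apply_zero_zero, smul_zero, mul_zero]
    · exact mul_eq_zero_of_left ((if_neg hp).trans (if_neg (by omega))) _
  have hlast : (blockMatrix n s r *ᵥ fun p => b p) p = 0 := by
    rw [hrec.blockMatrix_mulVec_b hpar]
    exact if_neg (by omega)
  rw [Matrix.mul_assoc, h.padTwo_one_mul, hrows.row_zero, hrows.row_one, Matrix.mul_add,
    Matrix.mul_add, mul_vecMulVec, mul_vecMulVec, Matrix.add_apply, Matrix.add_apply, hpad,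
    vecMulVec_apply, vecMulVec_apply, hcorner, hlast, zero_mul, add_zero, add_zero]

end Minors

section MinorsPos

/-- Positivity of all the minors `M_{j,k}(A)` with `1 ≤ j ≤ k ≤ n - 1`. -/
def MinorsPos (n : ℕ) (A : Matrix (Fin n) (Fin n) ℝ) : Prop :=
  ∀ j k, 1 ≤ j → j ≤ k → k ≤ n - 1 → 0 < Mminor n j k A

variable {n j k : ℕ} {A : Matrix (Fin (n + 2)) (Fin (n + 2)) ℝ} {A' U : Matrix (Fin n) (Fin n) ℝ}
  {b c : ℕ → ℝ}

theorem MinorsPos.pos_of_le (hA' : MinorsPos n A') (hj : 1 ≤ j) (hjn : j ≤ n) :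
    0 < Mminor n j (n - 1) A' := by
  obtain hlt | rfl := hjn.lt_or_eq
  · exact hA' j (n - 1) hj (by omega) le_rfl
  · rw [Mminor_eq (zero_add j), gapMinor, det_isEmpty, mul_one,
      (Nat.even_mul_pred_self j).neg_one_pow]
    exact one_pos

theorem neg_one_pow_mul_eq_mul_pred (hn : 1 ≤ n) :
    (-1 : ℝ) ^ (j * n) = (-1) ^ j * (-1) ^ (j * (n - 1)) := by
  rw [← pow_add, ← mul_one_add, Nat.add_sub_cancel' hn]

theorem IsSchurComplement.Mminor_of_lt (h : IsSchurComplement A A') (hjk : j ≤ k) (hk : k < n) :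
    Mminor (n + 2) j k A = A 0 1 ^ 2 * Mminor n j k A' := by
  have hmj : n - j + j = n := by omega
  rw [Mminor_eq (by omega : n - j + 2 + j = n + 2), Mminor_eq hmj,
    h.gapMinor_of_two_le (by omega) _ hmj, show n + 2 - k - 1 - 2 = n - k - 1 by omega]
  ring

theorem IsSchurComplement.leadingRows_apply (h : IsSchurComplement A A')
    (hrows : LeadingRows U A b c) : b 0 = 0 ∧ c 0 = -b 1 ∧ c 1 = 0 := by
  refine ⟨?_, ?_, ?_⟩
  · simpa [h.apply_zero_zero] using (hrows.apply_zero (q := 0) (by simp)).symm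
  · simpa [h.apply_one_zero, hrows.apply_zero_one] using (hrows.apply_one (q := 0) (by simp)).symm
  · simpa [h.apply_one_one] using (hrows.apply_one (q := 1) (by simp)).symm

theorem IsSchurComplement.Mminor_size_sub_two (h : IsSchurComplement A A')
    (hrows : LeadingRows U A b c) (hU : IsUnitriangular U) (hUA' : VanishesAboveAntidiag (U * A'))
    (hj : 1 ≤ j) (hjn : j ≤ n) :
    Mminor (n + 2) j n A = b 1 * ((-1) ^ j * b (j + 1)) * Mminor n j (n - 1) A' := by
  have hmj : n - j + j = n := by omega
  have h₂ : n - j + 2 + j = n + 2 := by omega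
  obtain ⟨hb0, hc0, -⟩ := h.leadingRows_apply hrows
  have hwedge : wedge (fun p : Fin (n + 2) => b p) (fun p => c p) (gapRows 1 h₂ 0)
      (gapRows 1 h₂ 1) = b 1 * b (j + 1) := by
    simp [wedge_apply, gapRows, hb0, hc0, Nat.add_comm 1 j]
  rw [Mminor_eq h₂, Mminor_eq hmj, show n + 2 - n - 1 = 1 by omega,
    h.gapMinor_of_le_one hrows hU hUA' le_rfl h₂ hmj, hwedge,
    neg_one_pow_mul_eq_mul_pred (hj.trans hjn), show n - (n - 1) - 1 = 0 by omega]
  ring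

theorem IsSchurComplement.Mminor_size_sub_one (h : IsSchurComplement A A')
    (hrows : LeadingRows U A b c) (hU : IsUnitriangular U) (hUA' : VanishesAboveAntidiag (U * A'))
    (hj : 1 ≤ j) (hjn : j ≤ n) :
    Mminor (n + 2) j (n + 1) A = casoratian b c j * Mminor n j (n - 1) A' := by
  have hmj : n - j + j = n := by omega
  have h₂ : n - j + 2 + j = n + 2 := by omega
  have hwedge : wedge (fun p : Fin (n + 2) => b p) (fun p => c p) (gapRows 0 h₂ 0)
      (gapRows 0 h₂ 1) = casoratian b c j := by
    simp [wedge_apply, gapRows, casoratian, Nat.add_comm 1 j]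
  have hsign : (-1 : ℝ) ^ (j * (n + 1)) = (-1) ^ (j * (n - 1)) := by
    obtain ⟨n, rfl⟩ := Nat.exists_eq_add_of_le' (hj.trans hjn)
    rw [show j * (n + 1 + 1) = j * (n + 1 - 1) + 2 * j by simp; ring, pow_add, pow_mul _ 2,
      neg_one_sq, one_pow, mul_one]
  rw [Mminor_eq h₂, Mminor_eq hmj, show n + 2 - (n + 1) - 1 = 0 by omega,
    h.gapMinor_of_le_one hrows hU hUA' zero_le_one h₂ hmj, hwedge, hsign,
    show n - (n - 1) - 1 = 0 by omega]
  ring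

theorem LeadingRows.Mminor_last (hrows : LeadingRows U A b c) (hU : IsUnitriangular U)
    (hA : Aᵀ = -A) : Mminor (n + 2) (n + 1) (n + 1) A = (-1) ^ n * b (n + 1) := by
  have hlast : A 0 (Fin.last _) = b (n + 1) := by
    have hval := congr_fun hrows.row_zero (Fin.last (n + 1))
    rwa [mulVec, (isUnitriangular_padTwo hU).row_last, single_one_dotProduct] at hval
  have hskew : A (Fin.last _) 0 = -A 0 (Fin.last _) := congr_fun₂ hA 0 (Fin.last _)
  have h₂ : 1 + (n + 1) = n + 2 := by omega
  have hrow : gapRows (n + 2 - (n + 1) - 1) h₂ 0 = Fin.last _ := by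
    ext
    simp [gapRows]
  have hcol : Fin.castLE (Nat.le.intro h₂) 0 = 0 := rfl
  have hsign : (-1 : ℝ) ^ ((n + 1) * (n + 1)) = -(-1) ^ n := by
    rw [add_one_mul, pow_add, (Nat.even_mul_succ_self n).neg_one_pow, pow_succ]
    ring
  rw [Mminor_eq h₂, gapMinor, det_fin_one, submatrix_apply, hrow, hcol, hskew, hlast, hsign,
    neg_mul_neg]

theorem IsSchurComplement.alternatingPair (h : IsSchurComplement A A')
    (hrows : LeadingRows U A b c) (hU : IsUnitriangular U) (hUA' : VanishesAboveAntidiag (U * A'))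
    (hskew : Aᵀ = -A) (hA' : MinorsPos n A') (hA : MinorsPos (n + 2) A) :
    AlternatingPair n b c := by
  obtain ⟨hb0, hc0, hc1⟩ := h.leadingRows_apply hrows
  have hlast : 0 < (-1) ^ n * b (n + 1) := by
    rw [← hrows.Mminor_last hU hskew]
    exact hA _ _ (by omega) le_rfl (by omega)
  have hmul {i : ℕ} (hi : 1 ≤ i) (hin : i ≤ n) : 0 < b 1 * ((-1) ^ i * b (i + 1)) := by
    refine pos_of_mul_pos_left ?_ (hA'.pos_of_le hi hin).le
    rw [← h.Mminor_size_sub_two hrows hU hUA' hi hin]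
    exact hA _ _ hi hin (by omega)
  have hb1 : 0 < b 1 := by
    rcases Nat.eq_zero_or_pos n with rfl | hn
    · simpa using hlast
    · exact pos_of_mul_pos_left (hmul hn le_rfl) hlast.le
  refine ⟨hb0, hc0, hc1, fun i hi => ?_, fun i hi hin => ?_⟩
  · rcases Nat.eq_zero_or_pos i with rfl | hi0
    · simpa using hb1
    · exact pos_of_mul_pos_right (hmul hi0 hi) hb1.le
  · refine pos_of_mul_pos_left ?_ (hA'.pos_of_le hi hin).le
    rw [← h.Mminor_size_sub_one hrows hU hUA' hi hin]
    exact hA _ _ hi (by omega) le_rfl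

theorem IsSchurComplement.minorsPos (h : IsSchurComplement A A')
    (hrows : LeadingRows U A b c) (hU : IsUnitriangular U) (hUA' : VanishesAboveAntidiag (U * A'))
    (hskew : Aᵀ = -A) (hA' : MinorsPos n A') (hbc : AlternatingPair n b c) :
    MinorsPos (n + 2) A := by
  intro j k hj hjk hk
  obtain hkn | rfl | rfl : k < n ∨ k = n ∨ k = n + 1 := by omega
  · rw [h.Mminor_of_lt hjk hkn]
    exact mul_pos (pow_pos (hrows.apply_zero_one ▸ hbc.b_one_pos) 2) (hA' j k hj hjk (by omega))
  · rw [h.Mminor_size_sub_two hrows hU hUA' hj hjk]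
    exact mul_pos (mul_pos hbc.b_one_pos (hbc.b_alternating j hjk)) (hA'.pos_of_le hj hjk)
  · obtain hjn | rfl := Nat.le_succ_iff.1 hjk
    · rw [h.Mminor_size_sub_one hrows hU hUA' hj hjn]
      exact mul_pos (hbc.casoratian_pos hjn) (hA'.pos_of_le hj hjn)
    · rw [hrows.Mminor_last hU hskew]
      exact hbc.b_alternating n le_rfl

theorem MinorsPos.apply_zero_one_ne_zero (hA : MinorsPos (n + 2) A) (hskew : Aᵀ = -A) :
    A 0 1 ≠ 0 := by
  intro h01
  have h00 : A 0 0 = 0 := self_eq_neg.1 (congr_fun₂ hskew 0 0)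
  have h10 : A 1 0 = 0 := by rw [← transpose_apply A, hskew, Matrix.neg_apply, h01, neg_zero]
  rcases Nat.eq_zero_or_pos n with rfl | hn
  · have hpos := hA 1 1 le_rfl le_rfl le_rfl
    rw [Mminor_eq (rfl : 1 + 1 = 0 + 2), gapMinor, det_fin_one] at hpos
    exact hpos.ne' (by simp [gapRows, h10])
  · have hpos := hA n n hn le_rfl (by omega)
    have hrow : (gapRows (n + 2 - n - 1) (Nat.add_comm 2 n) 0 : Fin (n + 2)) = 0 := by
      ext
      simp [gapRows]
    have hcol (q : Fin 2) : A 0 (Fin.castLE (Nat.le.intro (Nat.add_comm 2 n)) q) = 0 := by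
      fin_cases q
      exacts [h00, h01]
    rw [Mminor_eq (Nat.add_comm 2 n), gapMinor, det_fin_two] at hpos
    simp only [submatrix_apply, hrow, hcol, zero_mul, sub_zero, mul_zero, lt_self_iff_false] at hpos

end MinorsPos

section Parabolic

variable {R : Type*} [CommRing R] {n : ℕ}

/-- The elements `[U, U A; 0, U⁻ᵀ]` of the parabolic subgroup to which all the `x_i` belong. -/
def parabolic (U A : Matrix (Fin n) (Fin n) R) : Matrix (Fin n ⊕ Fin n) (Fin n ⊕ Fin n) R :=
  fromBlocks U (U * A) 0 (U⁻¹)ᵀ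

theorem parabolic_one_zero : parabolic (1 : Matrix (Fin n) (Fin n) R) 0 = 1 := by
  simp [parabolic]

theorem parabolic_mul_parabolic {U₁ U₂ A₁ A₂ A : Matrix (Fin n) (Fin n) R} (hU₂ : IsUnit U₂)
    (hA : U₂ * (A - A₂) * U₂ᵀ = A₁) :
    parabolic U₁ A₁ * parabolic U₂ A₂ = parabolic (U₁ * U₂) A := by
  have hinv : U₂ᵀ * (U₂⁻¹)ᵀ = 1 := by
    rw [← transpose_mul, nonsing_inv_mul _ ((isUnit_iff_isUnit_det U₂).1 hU₂), transpose_one]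
  have hblock : U₁ * (U₂ * A₂) + U₁ * A₁ * (U₂⁻¹)ᵀ = U₁ * U₂ * A := by
    rw [← hA, Matrix.mul_assoc U₁, Matrix.mul_assoc _ U₂ᵀ, hinv, Matrix.mul_one, ← Matrix.mul_add,
      ← Matrix.mul_add, add_sub_cancel, Matrix.mul_assoc]
  rw [parabolic, parabolic, fromBlocks_multiply, hblock]
  simp [parabolic, Matrix.mul_inv_rev]

theorem parabolic_zero_mul_parabolic (U₁ : Matrix (Fin n) (Fin n) R)
    {U₂ : Matrix (Fin n) (Fin n) R} (hU₂ : IsUnit U₂) (A : Matrix (Fin n) (Fin n) R) :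
    parabolic U₁ 0 * parabolic U₂ A = parabolic (U₁ * U₂) A :=
  parabolic_mul_parabolic hU₂ (by simp)

/-- Inserts two new coordinates in front of each half, fixed by the matrix. -/
def padBlocks (M : Matrix (Fin n ⊕ Fin n) (Fin n ⊕ Fin n) R) :
    Matrix (Fin (n + 2) ⊕ Fin (n + 2)) (Fin (n + 2) ⊕ Fin (n + 2)) R :=
  fromBlocks (padTwo 1 M.toBlocks₁₁) (padTwo 0 M.toBlocks₁₂) (padTwo 0 M.toBlocks₂₁)
    (padTwo 1 M.toBlocks₂₂)

theorem padBlocks_one : padBlocks (1 : Matrix (Fin n ⊕ Fin n) (Fin n ⊕ Fin n) R) = 1 := by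
  rw [padBlocks, ← fromBlocks_one, toBlocks_fromBlocks₁₁, toBlocks_fromBlocks₁₂,
    toBlocks_fromBlocks₂₁, toBlocks_fromBlocks₂₂, padTwo_one, padTwo_zero, fromBlocks_one]

theorem padBlocks_mul (M N : Matrix (Fin n ⊕ Fin n) (Fin n ⊕ Fin n) R) :
    padBlocks (M * N) = padBlocks M * padBlocks N := by
  rw [← fromBlocks_toBlocks M, ← fromBlocks_toBlocks N]
  simp [padBlocks, fromBlocks_multiply, padTwo_mul, padTwo_add]

theorem padBlocks_parabolic {U : Matrix (Fin n) (Fin n) R} (hU : IsUnit U)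
    (A : Matrix (Fin n) (Fin n) R) :
    padBlocks (parabolic U A) = parabolic (padTwo 1 U) (padTwo 0 A) := by
  have hinv : (padTwo 1 U)⁻¹ = padTwo 1 U⁻¹ := by
    refine inv_eq_right_inv ?_
    rw [padTwo_mul, mul_nonsing_inv _ ((isUnit_iff_isUnit_det U).1 hU), one_mul, padTwo_one]
  rw [parabolic, parabolic, hinv, transpose_padTwo, padTwo_mul, one_mul, padBlocks]
  simp [padTwo_zero]

theorem padTwo_one_bidiag {f g : ℕ → R} (h0 : g 0 = 0) (h1 : g 1 = 0)
    (hg : ∀ p, g (p + 2) = f p) : padTwo 1 (bidiag n f) = bidiag (n + 2) g := by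
  ext p q
  obtain hpq | ⟨p, q, rfl, rfl⟩ := lt_two_or_eq_succ_succ p q
  · rw [padTwo_apply_of_lt_two _ _ hpq, bidiag, of_apply]
    have hp : (p : ℕ) + 1 = q → g p = 0 := fun hq => by
      obtain hp | hp : (p : ℕ) = 0 ∨ (p : ℕ) = 1 := by omega
      all_goals simp [hp, h0, h1]
    simp only [Fin.ext_iff]
    grind
  · simp [padTwo_succ_succ, bidiag, hg]

end Parabolic

section Words

variable {n : ℕ}

/-- Splits the `2n` coordinates into two halves. -/
def halvesEquiv (n : ℕ) : Fin n ⊕ Fin n ≃ Fin (2 * n) :=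
  finSumFinEquiv.trans (finCongr (Nat.two_mul n).symm)

theorem halvesEquiv_inl (p : Fin n) : (halvesEquiv n (.inl p) : ℕ) = p := by
  simp [halvesEquiv]

theorem halvesEquiv_inr (p : Fin n) : (halvesEquiv n (.inr p) : ℕ) = n + p := by
  simp [halvesEquiv, add_comm]

/-- The matrix `x_i(t)` in block form. -/
def xBlocks (n i : ℕ) (t : ℝ) : Matrix (Fin n ⊕ Fin n) (Fin n ⊕ Fin n) ℝ :=
  reindexAlgEquiv ℝ ℝ (halvesEquiv n).symm (xMat n i t)

/-- The superdiagonal of `x_i(t)`. -/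
def singleParam (i : ℕ) (t : ℝ) (p : ℕ) : ℝ := if p + 1 = i then t else 0

theorem inv_bidiag_singleParam (i : ℕ) (t : ℝ) :
    (bidiag n (singleParam i t))⁻¹ = bidiag n (singleParam i (-t)) := by
  refine inv_eq_right_inv ?_
  rw [bidiag_mul_bidiag, ← bidiag_zero]
  · congr 1
    ext p
    simp only [Pi.add_apply, singleParam]
    split_ifs <;> simp
  · intro p
    simp only [singleParam]
    split_ifs <;> first | omega | simp

theorem xBlocks_of_lt {i : ℕ} (hi : 1 ≤ i) (hin : i < n) (t : ℝ) :
    xBlocks n i t = parabolic (bidiag n (singleParam i t)) 0 := by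
  rw [parabolic, inv_bidiag_singleParam, Matrix.mul_zero]
  ext (p | p) (q | q) <;>
    simp only [xBlocks, coe_reindexAlgEquiv, reindex_apply, Equiv.symm_symm, submatrix_apply,
      xMat, of_apply, fromBlocks_apply₁₁, fromBlocks_apply₁₂, fromBlocks_apply₂₁,
      fromBlocks_apply₂₂, halvesEquiv_inl, halvesEquiv_inr, if_pos hin, transpose_apply, bidiag,
      singleParam, Matrix.zero_apply] <;>
    grind

theorem xBlocks_size (hn : 2 ≤ n) (t : ℝ) :
    xBlocks n n t = parabolic 1 (t • cornerSkew ℝ n) := by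
  rw [parabolic, inv_one, transpose_one, Matrix.one_mul]
  ext (p | p) (q | q) <;>
    simp only [xBlocks, coe_reindexAlgEquiv, reindex_apply, Equiv.symm_symm, submatrix_apply,
      xMat, of_apply, fromBlocks_apply₁₁, fromBlocks_apply₁₂, fromBlocks_apply₂₁,
      fromBlocks_apply₂₂, halvesEquiv_inl, halvesEquiv_inr, lt_irrefl, if_false, one_apply,
      Fin.ext_iff, Matrix.smul_apply, cornerSkew, wedge_apply, smul_eq_mul, Matrix.zero_apply] <;>
    grind

theorem xBlocks_add_two {i : ℕ} (hi : 1 ≤ i) (hin : i ≤ n) (hn : 2 ≤ n) (t : ℝ) :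
    xBlocks (n + 2) (i + 2) t = padBlocks (xBlocks n i t) := by
  obtain hlt | rfl := hin.lt_or_eq
  · rw [xBlocks_of_lt hi hlt, xBlocks_of_lt (by omega) (by omega),
      padBlocks_parabolic (isUnitriangular_bidiag _).isUnit, padTwo_zero,
      padTwo_one_bidiag (g := singleParam (i + 2) t)]
    all_goals grind [singleParam]
  · rw [xBlocks_size hn, xBlocks_size (by omega), padBlocks_parabolic isUnit_one, padTwo_one,
      ← padTwo_cornerSkew hn, smul_padTwo, mul_zero]

/-- The product of the matrices `x_i` along a word `w`, in block form. -/
def wordProd (n : ℕ) : List ℕ → (ℕ → ℝ) → Matrix (Fin n ⊕ Fin n) (Fin n ⊕ Fin n) ℝ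
  | [], _ => 1
  | i :: w, t => xBlocks n i (t 0) * wordProd n w fun k => t (k + 1)

theorem wordProd_append (v w : List ℕ) (t : ℕ → ℝ) :
    wordProd n (v ++ w) t = wordProd n v t * wordProd n w fun k => t (k + v.length) := by
  induction v generalizing t with
  | nil => simp [wordProd]
  | cons i v ih =>
    rw [List.cons_append, wordProd, wordProd, ih, Matrix.mul_assoc, List.length_cons]
    rfl

theorem wordProd_map_add_two {w : List ℕ} (hw : ∀ i ∈ w, 1 ≤ i ∧ i ≤ n ∧ 2 ≤ n) (t : ℕ → ℝ) :
    wordProd (n + 2) (w.map (· + 2)) t = padBlocks (wordProd n w t) := by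
  induction w generalizing t with
  | nil => exact padBlocks_one.symm
  | cons i w ih =>
    obtain ⟨⟨hi, hin, hn⟩, hw⟩ := List.forall_mem_cons.1 hw
    rw [List.map_cons, wordProd, wordProd, padBlocks_mul, ih hw, xBlocks_add_two hi hin hn]

theorem prod_map_range_eq_wordProd (w : List ℕ) (t : ℕ → ℝ) :
    ((List.range w.length).map fun l => xBlocks n (w.getD l 0) (t l)).prod = wordProd n w t := by
  induction w generalizing t with
  | nil => rfl
  | cons i w ih =>
    rw [List.length_cons, List.range_succ_eq_map, List.map_cons, List.map_map, List.prod_cons,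
      wordProd, ← ih]
    rfl

theorem wordProd_reverse_range' {i : ℕ} (hi : 1 ≤ i) (l : ℕ) (h : i + l ≤ n) (t : ℕ → ℝ) :
    wordProd n (List.range' i l).reverse t =
      parabolic (bidiag n fun p => if i ≤ p + 1 ∧ p + 1 < i + l then t (i + l - 2 - p) else 0)
        0 := by
  induction l generalizing t with
  | zero =>
    have : (fun p => if i ≤ p + 1 ∧ p + 1 < i + 0 then t (i + 0 - 2 - p) else 0) = 0 := by
      ext p
      exact if_neg (by omega)
    rw [this, bidiag_zero, parabolic_one_zero]
    rfl
  | succ l ih =>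
    rw [List.range'_concat, List.reverse_append, List.reverse_singleton, List.singleton_append,
      wordProd, ih (by omega), one_mul, xBlocks_of_lt (by omega) (by omega),
      parabolic_zero_mul_parabolic _ (isUnitriangular_bidiag _).isUnit, bidiag_mul_bidiag]
    · congr 2
      ext p
      simp only [Pi.add_apply, singleParam]
      grind
    · intro p
      simp only [singleParam]
      grind

theorem decRun_add_two (a b : ℕ) : decRun (a + 2) (b + 2) = (decRun a b).map (· + 2) := by
  rw [decRun, decRun, show a + 2 + 1 - (b + 2) = a + 1 - b by omega, List.map_reverse,
    add_comm b, ← List.map_add_range']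
  simp only [add_comm]

theorem wordD_add_two (n : ℕ) :
    wordD (n + 2) = (n + 2) :: ((List.range' 1 n).reverse ++ ((List.range' 2 n).reverse ++
      (wordD n).map (· + 2))) := by
  have hblock (m : ℕ) (hm : m < n / 2) :
      (n + 2) :: (decRun (n + 2 - 2) (2 * (m + 1) + 1) ++ decRun (n + 2 - 1) (2 * (m + 1) + 2)) =
        (n :: (decRun (n - 2) (2 * m + 1) ++ decRun (n - 1) (2 * m + 2))).map (· + 2) := by
    rw [show n + 2 - 2 = n - 2 + 2 by omega, show n + 2 - 1 = n - 1 + 2 by omega, List.map_cons,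
      List.map_append, ← decRun_add_two, ← decRun_add_two]
    rfl
  rw [wordD, wordD, show (n + 2) / 2 = n / 2 + 1 by omega, List.range_succ_eq_map, List.map_cons,
    List.flatten_cons, List.map_map, List.map_flatten, List.map_map, List.cons_append,
    List.append_assoc]
  congr 4
  exact List.map_congr_left fun m hm => hblock m (List.mem_range.1 hm)

theorem Npar_add_two (n : ℕ) : Npar (n + 2) = Npar n + (2 * n + 1) := by
  rw [Npar, Npar, ← Nat.choose_two_right, ← Nat.choose_two_right, Nat.choose_succ_succ' (n + 1) 1,
    Nat.choose_succ_succ' n 1, Nat.choose_one_right, Nat.choose_one_right]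
  ring

theorem length_wordD (n : ℕ) : (wordD n).length = Npar n := by
  induction n using Nat.twoStepInduction with
  | zero => rfl
  | one => rfl
  | more n ih _ =>
    rw [wordD_add_two, Npar_add_two, ← ih]
    simp only [List.length_cons, List.length_append, List.length_reverse, List.length_range',
      List.length_map]
    omega

theorem mem_wordD_bounds {i : ℕ} (hi : i ∈ wordD n) : 1 ≤ i ∧ i ≤ n ∧ 2 ≤ n := by
  simp only [wordD, List.mem_flatten, List.mem_map, List.mem_range] at hi
  obtain ⟨_, ⟨m, hm, rfl⟩, hi⟩ := hi
  simp only [decRun, List.mem_cons, List.mem_append, List.mem_reverse, List.mem_range'_1] at hi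
  omega

theorem reindex_prodX (t : ℕ → ℝ) :
    reindexAlgEquiv ℝ ℝ (halvesEquiv n).symm (prodX n t) = wordProd n (wordD n) t := by
  rw [prodX, map_list_prod, List.map_map, ← length_wordD, ← prod_map_range_eq_wordProd]
  rfl

theorem Amat_eq_of_wordProd_eq {t : ℕ → ℝ} {U A : Matrix (Fin n) (Fin n) ℝ} (hU : IsUnit U)
    (h : wordProd n (wordD n) t = parabolic U A) : Amat n t = A := by
  rw [← reindex_prodX, coe_reindexAlgEquiv, reindex_apply] at h
  have hX1 : X1 n t = U := by
    ext p q
    rw [← fromBlocks_apply₁₁ U (U * A) 0 (U⁻¹)ᵀ p q, ← parabolic, ← h]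
    exact congr_arg₂ (prodX n t) (Fin.ext (halvesEquiv_inl p).symm)
      (Fin.ext (halvesEquiv_inl q).symm)
  have hX2 : X2 n t = U * A := by
    ext p q
    rw [← fromBlocks_apply₁₂ U (U * A) 0 (U⁻¹)ᵀ p q, ← parabolic, ← h]
    exact congr_arg₂ (prodX n t) (Fin.ext (halvesEquiv_inl p).symm)
      (Fin.ext (halvesEquiv_inr q).symm)
  rw [Amat, hX1, hX2, ← Matrix.mul_assoc,
    nonsing_inv_mul _ ((isUnit_iff_isUnit_det U).1 hU), Matrix.one_mul]

/-- The parameters `s` of the first run `x_n ⋯ x_1` of the first block of the word of size `n + 2`,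
indexed as in `BlockParams`. -/
def firstRunParams (n : ℕ) (t : ℕ → ℝ) (p : ℕ) : ℝ := if p < n then t (n - p) else 0

/-- The parameters `r` of the second run `x_{n+1} ⋯ x_2` of the first block of the word of size
`n + 2`, indexed as in `BlockParams`. -/
def secondRunParams (n : ℕ) (t : ℕ → ℝ) (p : ℕ) : ℝ :=
  if 1 ≤ p ∧ p ≤ n then t (2 * n + 1 - p) else 0

theorem wordProd_runs (n : ℕ) (t : ℕ → ℝ) (w : List ℕ) {U A : Matrix (Fin (n + 2)) (Fin (n + 2)) ℝ}
    (hU : IsUnit U) (h : wordProd (n + 2) w (fun k => t (k + (2 * n + 1))) = parabolic U A) :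
    wordProd (n + 2) ((List.range' 1 n).reverse ++ ((List.range' 2 n).reverse ++ w))
        (fun k => t (k + 1)) =
      parabolic (blockMatrix n (firstRunParams n t) (secondRunParams n t) * U) A := by
  have hfirst : wordProd (n + 2) (List.range' 1 n).reverse (fun k => t (k + 1)) =
      parabolic (bidiag (n + 2) (firstRunParams n t)) 0 := by
    rw [wordProd_reverse_range' le_rfl n (by omega)]
    congr 2
    ext p
    grind [firstRunParams]
  have hsecond : wordProd (n + 2) (List.range' 2 n).reverse (fun k => t (k + (n + 1))) =
      parabolic (bidiag (n + 2) (secondRunParams n t)) 0 := by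
    rw [wordProd_reverse_range' one_le_two n (by omega)]
    congr 2
    ext p
    grind [secondRunParams]
  have hshift₁ (k : ℕ) : k + n + 1 = k + (n + 1) := by omega
  have hshift₂ (k : ℕ) : k + n + (n + 1) = k + (2 * n + 1) := by omega
  have hbidiag := (isUnitriangular_bidiag (n := n + 2) (secondRunParams n t)).isUnit
  simp only [wordProd_append, List.length_reverse, List.length_range', hfirst, hshift₁, hshift₂,
    hsecond, h]
  rw [parabolic_zero_mul_parabolic _ hU, parabolic_zero_mul_parabolic _ (hbidiag.mul hU),
    blockMatrix, Matrix.mul_assoc]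

theorem wordProd_wordD_add_two {t : ℕ → ℝ} {U A' : Matrix (Fin n) (Fin n) ℝ}
    {W A : Matrix (Fin (n + 2)) (Fin (n + 2)) ℝ} (hU : IsUnitriangular U)
    (h : wordProd n (wordD n) (fun k => t (k + (2 * n + 1))) = parabolic U A')
    (hW : blockMatrix n (firstRunParams n t) (secondRunParams n t) * padTwo 1 U = W)
    (hA : W * (A - padTwo 0 A') * Wᵀ = t 0 • cornerSkew ℝ (n + 2)) :
    wordProd (n + 2) (wordD (n + 2)) t = parabolic W A := by
  have hpad := isUnitriangular_padTwo hU
  have htail : wordProd (n + 2) ((wordD n).map (· + 2)) (fun k => t (k + (2 * n + 1))) =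
      parabolic (padTwo 1 U) (padTwo 0 A') := by
    rw [wordProd_map_add_two fun _ => mem_wordD_bounds, h, padBlocks_parabolic hU.isUnit]
  have hWunit : IsUnit W := hW ▸ ((isUnitriangular_blockMatrix n _ _).mul hpad).isUnit
  rw [wordD_add_two, wordProd, wordProd_runs n t _ hpad.isUnit htail, hW,
    xBlocks_size (by omega), parabolic_mul_parabolic hWunit hA, Matrix.one_mul]

end Words

section PositiveFactorization

variable {n : ℕ} {τ : ℝ} {s r : ℕ → ℝ}

/-- `[U, U A; 0, U⁻ᵀ]` is the product along the word of size `n` for some positive parameters,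
expressed by peeling off the blocks of the word one at a time (see `mem_Spos_iff`). -/
inductive PositiveFactorization :
    ∀ {n : ℕ}, Matrix (Fin n) (Fin n) ℝ → Matrix (Fin n) (Fin n) ℝ → Prop
  | base {n : ℕ} (hn : n < 2) : PositiveFactorization (n := n) 1 0
  | step {n : ℕ} {U A' : Matrix (Fin n) (Fin n) ℝ} {A : Matrix (Fin (n + 2)) (Fin (n + 2)) ℝ}
      {τ : ℝ} {s r : ℕ → ℝ} (h : PositiveFactorization U A') (hpar : BlockParams n τ s r)
      (hA : blockMatrix n s r * padTwo 1 U * (A - padTwo 0 A') *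
        (blockMatrix n s r * padTwo 1 U)ᵀ = τ • cornerSkew ℝ (n + 2)) :
      PositiveFactorization (blockMatrix n s r * padTwo 1 U) A

theorem PositiveFactorization.isUnitriangular {U A : Matrix (Fin n) (Fin n) ℝ}
    (h : PositiveFactorization U A) : IsUnitriangular U := by
  induction h with
  | base => exact .one
  | step _ _ _ ih => exact (isUnitriangular_blockMatrix _ _ _).mul (isUnitriangular_padTwo ih)

theorem blockParams_of_pos {t : ℕ → ℝ} (ht : ∀ k < 2 * n + 1, 0 < t k) :
    BlockParams n (t 0) (firstRunParams n t) (secondRunParams n t) where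
  τ_pos := ht 0 (by omega)
  s_pos i hi := by
    rw [firstRunParams, if_pos hi]
    exact ht _ (by omega)
  s_eq_zero i hi := if_neg (by omega)
  r_zero := if_neg (by omega)
  r_pos i h1 hi := by
    rw [secondRunParams, if_pos ⟨h1, hi⟩]
    exact ht _ (by omega)
  r_eq_zero i hi := if_neg (by omega)

/-- The parameter sequence with first block `τ, s (n-1), …, s 0, r n, …, r 1`, followed by `t`. -/
def prependBlock (n : ℕ) (τ : ℝ) (s r t : ℕ → ℝ) (k : ℕ) : ℝ :=
  if k = 0 then τ else if k ≤ n then s (n - k) else if k ≤ 2 * n then r (2 * n + 1 - k)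
    else t (k - (2 * n + 1))

theorem prependBlock_add (n : ℕ) (τ : ℝ) (s r t : ℕ → ℝ) (k : ℕ) :
    prependBlock n τ s r t (k + (2 * n + 1)) = t k := by
  grind [prependBlock]

theorem BlockParams.firstRunParams_prependBlock (h : BlockParams n τ s r) (t : ℕ → ℝ) :
    firstRunParams n (prependBlock n τ s r t) = s := by
  ext p
  have := h.s_eq_zero p
  grind [firstRunParams, prependBlock]

theorem BlockParams.secondRunParams_prependBlock (h : BlockParams n τ s r) (t : ℕ → ℝ) :
    secondRunParams n (prependBlock n τ s r t) = r := by
  ext p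
  have := h.r_eq_zero p
  have := h.r_zero
  grind [secondRunParams, prependBlock]

theorem BlockParams.prependBlock_pos (h : BlockParams n τ s r) {t : ℕ → ℝ} {m k : ℕ}
    (ht : ∀ k < m, 0 < t k) (hk : k < m + (2 * n + 1)) : 0 < prependBlock n τ s r t k := by
  rw [prependBlock]
  split_ifs
  · exact h.τ_pos
  · exact h.s_pos _ (by omega)
  · exact h.r_pos _ (by omega) (by omega)
  · exact ht _ (by omega)

theorem wordProd_wordD_of_lt_two (hn : n < 2) (t : ℕ → ℝ) :
    wordProd n (wordD n) t = parabolic 1 0 := by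
  rw [wordD, Nat.div_eq_of_lt hn, parabolic_one_zero]
  rfl

theorem exists_positiveFactorization_wordProd_eq (t : ℕ → ℝ) (ht : ∀ k < Npar n, 0 < t k) :
    ∃ U A, PositiveFactorization U A ∧ wordProd n (wordD n) t = parabolic U A := by
  induction n using Nat.twoStepInduction generalizing t with
  | zero => exact ⟨1, 0, .base two_pos, wordProd_wordD_of_lt_two two_pos t⟩
  | one => exact ⟨1, 0, .base one_lt_two, wordProd_wordD_of_lt_two one_lt_two t⟩
  | more n ih _ =>
    rw [Npar_add_two] at ht
    obtain ⟨U, A', hUA', hprod⟩ :=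
      ih (fun k => t (k + (2 * n + 1))) fun k hk => ht _ (by omega)
    have hU := hUA'.isUnitriangular
    obtain ⟨A, hA⟩ := exists_mul_sub_mul_transpose_eq
      ((isUnitriangular_blockMatrix n (firstRunParams n t) (secondRunParams n t)).mul
        (isUnitriangular_padTwo hU)).isUnit (padTwo 0 A') (t 0 • cornerSkew ℝ (n + 2))
    have hpar := blockParams_of_pos (n := n) (t := t) fun k hk => ht k (by omega)
    exact ⟨_, A, .step hUA' hpar hA, wordProd_wordD_add_two hU hprod rfl hA⟩

theorem PositiveFactorization.exists_wordProd_eq {U A : Matrix (Fin n) (Fin n) ℝ}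
    (h : PositiveFactorization U A) :
    ∃ t : ℕ → ℝ, (∀ k < Npar n, 0 < t k) ∧ wordProd n (wordD n) t = parabolic U A := by
  induction h with
  | base hn => exact ⟨1, fun _ _ => one_pos, wordProd_wordD_of_lt_two hn 1⟩
  | @step n U A' A τ s r h hpar hA ih =>
    obtain ⟨t, ht, hprod⟩ := ih
    refine ⟨prependBlock n τ s r t, fun k hk => ?_, ?_⟩
    · exact hpar.prependBlock_pos ht (Npar_add_two n ▸ hk)
    · refine wordProd_wordD_add_two h.isUnitriangular ?_ ?_ hA
      · simpa only [prependBlock_add] using hprod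
      · rw [hpar.firstRunParams_prependBlock, hpar.secondRunParams_prependBlock]

theorem mem_Spos_iff {A : Matrix (Fin n) (Fin n) ℝ} :
    A ∈ Spos n ↔ ∃ U, PositiveFactorization U A := by
  constructor
  · rintro ⟨t, ht, rfl⟩
    obtain ⟨U, A, hUA, hprod⟩ := exists_positiveFactorization_wordProd_eq t ht
    exact ⟨U, (Amat_eq_of_wordProd_eq hUA.isUnitriangular.isUnit hprod).symm ▸ hUA⟩
  · rintro ⟨U, hUA⟩
    obtain ⟨t, ht, hprod⟩ := hUA.exists_wordProd_eq
    exact ⟨t, ht, (Amat_eq_of_wordProd_eq hUA.isUnitriangular.isUnit hprod).symm⟩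

end PositiveFactorization

section TotalPositivity

variable {n : ℕ}

theorem BlockParams.exists_isSchurComplement {τ : ℝ} {s r : ℕ → ℝ} (hpar : BlockParams n τ s r)
    {U A' : Matrix (Fin n) (Fin n) ℝ} {A : Matrix (Fin (n + 2)) (Fin (n + 2)) ℝ}
    (hU : IsUnitriangular U)
    (hA : blockMatrix n s r * padTwo 1 U * (A - padTwo 0 A') *
      (blockMatrix n s r * padTwo 1 U)ᵀ = τ • cornerSkew ℝ (n + 2)) :
    IsSchurComplement A A' ∧ ∃ b c, LeadingRows U A b c ∧ AlternatingPair n b c ∧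
      BlockRecurrence n τ s r b c := by
  obtain ⟨b, c, hbc, hrec⟩ := hpar.exists_alternatingPair
  have hwedge : b 1 • (padTwo 1 U * (A - padTwo 0 A') * (padTwo 1 U)ᵀ) =
      wedge (fun p : Fin (n + 2) => b p) (fun p => c p) := by
    refine eq_of_mul_mul_transpose_eq (isUnitriangular_blockMatrix n s r).isUnit ?_
    rw [hrec.blockMatrix_mul_wedge_mul_transpose hpar hbc, mul_comm τ, ← smul_smul, ← hA,
      transpose_mul, Matrix.mul_smul, Matrix.smul_mul]
    simp only [Matrix.mul_assoc]
  obtain ⟨hschur, hrows⟩ := isSchurComplement_and_leadingRows_of_wedge_eq hU hbc.b_zero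
    hbc.b_one_pos.ne' hbc.c_zero hbc.c_one hwedge
  exact ⟨hschur, b, c, hrows, hbc, hrec⟩

theorem IsSchurComplement.mul_sub_mul_transpose_eq_smul_cornerSkew {τ : ℝ} {s r b c : ℕ → ℝ}
    {U A' : Matrix (Fin n) (Fin n) ℝ} {A : Matrix (Fin (n + 2)) (Fin (n + 2)) ℝ}
    (h : IsSchurComplement A A') (hrows : LeadingRows U A b c) (hbc : AlternatingPair n b c)
    (hrec : BlockRecurrence n τ s r b c) (hpar : BlockParams n τ s r) :
    blockMatrix n s r * padTwo 1 U * (A - padTwo 0 A') * (blockMatrix n s r * padTwo 1 U)ᵀ =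
      τ • cornerSkew ℝ (n + 2) := by
  refine smul_right_injective _ hbc.b_one_pos.ne' ?_
  beta_reduce
  rw [smul_smul, mul_comm _ τ, ← hrec.blockMatrix_mul_wedge_mul_transpose hpar hbc,
    ← h.mul_sub_mul_transpose hrows, transpose_mul, Matrix.mul_smul, Matrix.smul_mul]
  simp only [Matrix.mul_assoc]

namespace PositiveFactorization

variable {U A : Matrix (Fin n) (Fin n) ℝ}

theorem transpose_eq_neg (h : PositiveFactorization U A) : Aᵀ = -A := by
  induction h with
  | base => simp
  | step h hpar hA ih =>
    obtain ⟨hschur, -⟩ := hpar.exists_isSchurComplement h.isUnitriangular hA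
    exact hschur.transpose_eq_neg ih

theorem vanishesAboveAntidiag_mul (h : PositiveFactorization U A) :
    VanishesAboveAntidiag (U * A) := by
  induction h with
  | base =>
    rw [Matrix.mul_zero]
    exact fun _ _ _ => rfl
  | step h hpar hA ih =>
    obtain ⟨hschur, b, c, hrows, hbc, hrec⟩ :=
      hpar.exists_isSchurComplement h.isUnitriangular hA
    exact hschur.vanishesAboveAntidiag_mul hrows ih hrec hpar hbc

theorem minorsPos (h : PositiveFactorization U A) : MinorsPos n A := by
  induction h with
  | base hn => exact fun j k hj hjk hk => by omega
  | step h hpar hA ih =>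
    obtain ⟨hschur, b, c, hrows, hbc, -⟩ := hpar.exists_isSchurComplement h.isUnitriangular hA
    exact hschur.minorsPos hrows h.isUnitriangular h.vanishesAboveAntidiag_mul
      (hschur.transpose_eq_neg h.transpose_eq_neg) ih hbc

end PositiveFactorization

theorem MinorsPos.schurComplement {A : Matrix (Fin (n + 2)) (Fin (n + 2)) ℝ}
    (hA : MinorsPos (n + 2) A) (hskew : Aᵀ = -A) : MinorsPos n (schurComplement A) := by
  intro j k hj hjk hk
  have h01 := hA.apply_zero_one_ne_zero hskew
  have hpos := hA j k hj hjk (by omega)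
  rw [(isSchurComplement_schurComplement hskew h01).Mminor_of_lt hjk (by omega)] at hpos
  exact pos_of_mul_pos_right hpos (sq_nonneg _)

theorem MinorsPos.exists_positiveFactorization {A : Matrix (Fin n) (Fin n) ℝ}
    (hA : MinorsPos n A) (hskew : Aᵀ = -A) : ∃ U, PositiveFactorization U A := by
  induction n using Nat.twoStepInduction with
  | zero => exact ⟨1, eq_zero_of_transpose_eq_neg hskew ▸ .base two_pos⟩
  | one => exact ⟨1, eq_zero_of_transpose_eq_neg hskew ▸ .base one_lt_two⟩
  | more n ih _ =>
    have hschur := isSchurComplement_schurComplement hskew (hA.apply_zero_one_ne_zero hskew)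
    have hA' := hA.schurComplement hskew
    obtain ⟨U, hU⟩ := ih hA' (transpose_schurComplement hskew)
    obtain ⟨b, c, hrows⟩ := exists_leadingRows U A
    have hbc := hschur.alternatingPair hrows hU.isUnitriangular hU.vanishesAboveAntidiag_mul hskew
      hA' hA
    obtain ⟨τ, s, r, hpar, hrec⟩ := hbc.exists_blockParams
    exact ⟨_, .step hU hpar
      (hschur.mul_sub_mul_transpose_eq_smul_cornerSkew hrows hbc hrec hpar)⟩

end TotalPositivity

/-- A skew-symmetric matrix `A` is totally positive iff `M_{j,k}(A) > 0`
for all `1 ≤ j ≤ k ≤ n-1`. -/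
theorem skew_totally_positive_iff_minors_pos
    (n : ℕ) (hn : 2 ≤ n) (A : Matrix (Fin n) (Fin n) ℝ) (hA : Aᵀ = -A) :
    A ∈ Spos n ↔ ∀ j k : ℕ, 1 ≤ j → j ≤ k → k ≤ n - 1 → 0 < Mminor n j k A := by
  rw [mem_Spos_iff]
  exact ⟨fun ⟨_, hUA⟩ => hUA.minorsPos, fun hpos => MinorsPos.exists_positiveFactorization hpos hA⟩
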